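/- arXiv:2507.05231 — 6 statements merged into one kernel-verified Lean document; each statement's English description precedes it below -/
import Mathlib

section
/- There exist absolute constants c > 0 and K > 0 such that for every integer D ≥ 1 and every integer n > (2D)^{100D}, one has η(3n) ≥ c · D^{-K} · (3/4)^{D/2} · n^{-2/D}. -/
/-- `eta m` is the maximum of `e(G)/m²` over all simple graphs `G` on `m` vertices
in which every edge is contained in exactly one triangle. -/
noncomputable def eta (m : ℕ) : ℝ :=
  sSup {x : ℝ | ∃ G : SimpleGraph (Fin m),
    (∀ ⦃u v⦄, G.Adj u v → ∃! w, G.Adj u w ∧ G.Adj v w) ∧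
    x = (G.edgeSet.ncard : ℝ) / m ^ 2}

/-!
Take three copies of a set of lattice points in `ℝ^D` as vertices, and as triangles the solutions
`(a, b, c)` of `a + b + c = 0` for which `‖a - b‖` is a prescribed distance. By the parallelogram
law the resulting tripartite graph has no further triangles, so every edge lies in exactly one.
Choose the lattice points in a ball of volume `n`, of radius `t` comparable to `n ^ (1 / D)` up to
powers of `D`. Given `a`, the admissible `b` fill the lens cut out by the balls about `0` and `-a`,
which has volume at least `(√3 / 2) ^ D * n` up to a factor `10 * D` and the loss from rounding to
lattice points. Squared distances of lattice points are integers, so there are at most `4 * t ^ 2`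
distances to choose from, and the most popular one gives at least about
`(√3 / 2) ^ D * n ^ 2 / t ^ 2` triangles on `3 * n` vertices. If `n` is too small for dimension `D`,
the construction in the largest dimension that is not too large for `n` does at least as well up to
a power of `D`.
-/

open Finset MeasureTheory Metric Module
open scoped RealInnerProductSpace

lemma existsUnique_adj_adj_of_locallyLinear {V : Type*} {G : SimpleGraph V}
    (hG : G.LocallyLinear) ⦃u v : V⦄ (huv : G.Adj u v) : ∃! w, G.Adj u w ∧ G.Adj v w := by
  classical
  obtain ⟨s, hs, hu, hv⟩ := hG.2 huv
  obtain ⟨w, hw, hwuv⟩ : ∃ w ∈ s, w ∉ ({u, v} : Finset V) :=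
    exists_mem_notMem_of_card_lt_card (by rw [hs.card_eq]; exact card_le_two.trans_lt (by simp))
  simp only [mem_insert, mem_singleton, not_or] at hwuv
  refine ⟨w, ⟨hs.isClique hu hw (Ne.symm hwuv.1), hs.isClique hv hw (Ne.symm hwuv.2)⟩, ?_⟩
  rintro w' ⟨huw', hvw'⟩
  have hs' : G.IsNClique 3 {u, v, w'} := SimpleGraph.is3Clique_triple_iff.2 ⟨huv, huw', hvw'⟩
  have hss' : s = {u, v, w'} :=
    hG.edgeDisjointTriangles.mem_sym2_subsingleton (e := s(u, v)) (by simpa using huv.ne)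
      ⟨hs, by simp [hu, hv]⟩ ⟨hs', by simp⟩
  rw [hss'] at hw
  grind

lemma three_mul_ruzsaSzemerediNumberNat_div_le_eta (m : ℕ) :
    3 * (ruzsaSzemerediNumberNat m : ℝ) / m ^ 2 ≤ eta m := by
  obtain ⟨G, _, hcard, hG⟩ := ruzsaSzemerediNumber_spec (α := Fin m)
  have hfinite : {x : ℝ | ∃ G : SimpleGraph (Fin m),
      (∀ ⦃u v⦄, G.Adj u v → ∃! w, G.Adj u w ∧ G.Adj v w) ∧
      x = (G.edgeSet.ncard : ℝ) / m ^ 2}.Finite := by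
    refine (Set.finite_range fun G : SimpleGraph (Fin m) ↦ (G.edgeSet.ncard : ℝ) / m ^ 2).subset ?_
    rintro x ⟨G, -, rfl⟩
    exact ⟨G, rfl⟩
  refine le_csSup hfinite.bddAbove ⟨G, existsUnique_adj_adj_of_locallyLinear hG, ?_⟩
  rw [← SimpleGraph.coe_edgeFinset, Set.ncard_coe_finset, hG.card_edgeFinset, hcard]
  push_cast
  rfl

lemma eta_nonneg (m : ℕ) : 0 ≤ eta m :=
  le_trans (by positivity) (three_mul_ruzsaSzemerediNumberNat_div_le_eta m)

section ZeroSum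

variable {G : Type*} [AddCommGroup G] [DecidableEq G]

/-- The solutions of `a + b + c = 0` with `a, b, c ∈ S`, encoded by the pair `(a, b)`. -/
def zeroSumPairs (S : Finset G) : Finset (G × G) :=
  {p ∈ S ×ˢ S | -(p.1 + p.2) ∈ S}

lemma card_zeroSumPairs (S : Finset G) :
    #(zeroSumPairs S) = ∑ a ∈ S, #{b ∈ S | -(a + b) ∈ S} := by
  simp only [zeroSumPairs, card_filter, sum_product]

variable {E : Type*} [NormedAddCommGroup E] [InnerProductSpace ℝ E]

lemma eq_of_add_eq_add_of_norm_sub_eq {a a' b b' : E} (h : a' + b = a + b')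
    (ha' : ‖a' - b‖ = ‖a - b‖) (hb' : ‖a - b'‖ = ‖a - b‖) : a = a' := by
  have hparallelogram := parallelogram_law_with_norm ℝ (a - b) (a - a')
  have hadd : (a - b) + (a - a') = a - b' := by
    rw [sub_add_sub_comm, add_comm b, h, add_sub_add_left_eq_sub]
  rw [hadd, sub_sub_sub_cancel_left, ha', hb'] at hparallelogram
  have hzero : ‖a - a'‖ = 0 := by nlinarith
  exact sub_eq_zero.1 (norm_eq_zero.1 hzero)

/-- The triangles are the zero-sum triples `(a, b, c)` with `‖φ a - φ b‖ = r`; the parallelogram law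
rules out accidental ones. -/
lemma card_filter_norm_sub_eq_le_ruzsaSzemerediNumberNat (φ : G →+ E)
    (hφ : Function.Injective φ) (S : Finset G) (r : ℝ) :
    #{p ∈ zeroSumPairs S | ‖φ p.1 - φ p.2‖ = r} ≤ ruzsaSzemerediNumberNat (3 * #S) := by
  let t : Finset (S × S × S) := {q | (q.1 + q.2.1 + q.2.2 : G) = 0 ∧ ‖φ q.1 - φ q.2.1‖ = r}
  have mem_t (a b c : S) : (a, b, c) ∈ t ↔ (a + b + c : G) = 0 ∧ ‖φ a - φ b‖ = r :=
    mem_filter_univ _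
  have : SimpleGraph.TripartiteFromTriangles.ExplicitDisjoint t := by
    constructor <;> intro a b c d h h' <;> rw [mem_t] at h h' <;> refine Subtype.ext ?_ <;>
      simpa only [add_left_inj, add_right_inj] using h.1.trans h'.1.symm
  have : SimpleGraph.TripartiteFromTriangles.NoAccidental t := by
    refine ⟨fun a a' b b' c c' h₁ h₂ h₃ ↦ Or.inl <| Subtype.ext <| hφ ?_⟩
    rw [mem_t] at h₁ h₂ h₃
    have hadd : (a' + b : G) = a + b' := add_right_cancel (h₁.1.trans h₂.1.symm)
    exact eq_of_add_eq_add_of_norm_sub_eq (by simpa only [map_add] using congrArg φ hadd)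
      (h₁.2.trans h₃.2.symm) (h₂.2.trans h₃.2.symm)
  have hcard : #{p ∈ zeroSumPairs S | ‖φ p.1 - φ p.2‖ = r} ≤ #t := by
    refine card_le_card_of_surjOn (fun q : S × S × S ↦ ((q.1 : G), (q.2.1 : G))) ?_
    rintro ⟨a, b⟩ hp
    simp only [zeroSumPairs, coe_filter, mem_filter, mem_product, Set.mem_ofPred_eq] at hp
    obtain ⟨⟨⟨ha, hb⟩, hc⟩, hr⟩ := hp
    exact ⟨(⟨a, ha⟩, ⟨b, hb⟩, ⟨_, hc⟩), (mem_t _ _ _).2 ⟨add_neg_cancel _, hr⟩, rfl⟩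
  calc
    _ ≤ #t := hcard
    _ = #((SimpleGraph.TripartiteFromTriangles.graph t).cliqueFinset 3) :=
      (SimpleGraph.TripartiteFromTriangles.card_triangles t).symm
    _ ≤ ruzsaSzemerediNumber (S ⊕ S ⊕ S) :=
      (SimpleGraph.TripartiteFromTriangles.locallyLinear t).le_ruzsaSzemerediNumber
    _ = ruzsaSzemerediNumberNat (3 * #S) := by
      rw [← ruzsaSzemerediNumberNat_card]
      congr 1
      simp only [Fintype.card_sum, Fintype.card_coe]
      ring

/-- Pigeonhole over the common difference norm. -/
lemma card_zeroSumPairs_le (φ : G →+ E) (hφ : Function.Injective φ) (S : Finset G)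
    (T : Finset ℝ) (hT : ∀ a ∈ S, ∀ b ∈ S, ‖φ a - φ b‖ ∈ T) :
    #(zeroSumPairs S) ≤ #T * ruzsaSzemerediNumberNat (3 * #S) := by
  rw [mul_comm]
  refine card_le_mul_card_image_of_maps_to (f := fun p ↦ ‖φ p.1 - φ p.2‖) ?_ _ fun r _ ↦
    card_filter_norm_sub_eq_le_ruzsaSzemerediNumberNat φ hφ S r
  intro p hp
  simp only [zeroSumPairs, mem_filter, mem_product] at hp
  exact hT _ hp.1.1 _ hp.1.2

lemma card_zeroSumPairs_le_mul_eta (φ : G →+ E) (hφ : Function.Injective φ) {S : Finset G}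
    {T : Finset ℝ} (hT : ∀ a ∈ S, ∀ b ∈ S, ‖φ a - φ b‖ ∈ T) {n : ℕ} (hS : #S ≤ n) :
    (#(zeroSumPairs S) : ℝ) ≤ #T * (3 * n ^ 2 * eta (3 * n)) := by
  calc
    (#(zeroSumPairs S) : ℝ) ≤ #T * ruzsaSzemerediNumberNat (3 * #S) := by
      exact_mod_cast card_zeroSumPairs_le φ hφ S T hT
    _ ≤ #T * ruzsaSzemerediNumberNat (3 * n) := by
      gcongr
    _ ≤ #T * (3 * n ^ 2 * eta (3 * n)) := by
      refine mul_le_mul_of_nonneg_left ?_ (Nat.cast_nonneg _)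
      have heta := three_mul_ruzsaSzemerediNumberNat_div_le_eta (3 * n)
      rcases n.eq_zero_or_pos with rfl | hn
      · simp
      · rw [div_le_iff₀ (by positivity)] at heta
        push_cast at heta
        linarith

end ZeroSum

section RealEstimates

lemma abs_sub_mul_intCast {s : ℝ} (hs : 0 < s) (p : ℝ) (j : ℤ) :
    |p - s * j| = s * |p / s - j| := by
  rw [← abs_of_pos hs, ← abs_mul, abs_of_pos hs, mul_sub, mul_div_cancel₀ p hs.ne']

lemma abs_sub_mul_round_div_le {s : ℝ} (hs : 0 < s) (p : ℝ) (j : ℤ) :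
    |p - s * round (p / s)| ≤ |p - s * j| := by
  rw [abs_sub_mul_intCast hs, abs_sub_mul_intCast hs p j]
  exact mul_le_mul_of_nonneg_left (round_le (p / s) j) hs.le

lemma abs_sub_mul_round_div_le_half {s : ℝ} (hs : 0 < s) (p : ℝ) :
    |p - s * round (p / s)| ≤ s / 2 := by
  rw [abs_sub_mul_intCast hs]
  nlinarith [abs_sub_round (p / s)]

lemma one_half_le_one_sub_pow {a : ℝ} (d : ℕ) (ha : a ≤ 1) (hda : d * a ≤ 1 / 2) :
    1 / 2 ≤ (1 - a) ^ d :=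
  calc
    (1 : ℝ) / 2 ≤ 1 + d * -a := by linarith
    _ ≤ (1 + -a) ^ d := one_add_mul_le_pow (by linarith) d
    _ = (1 - a) ^ d := by rw [← sub_eq_add_neg]

end RealEstimates

section Ball

variable {E : Type*} [NormedAddCommGroup E] [NormedSpace ℝ E] [FiniteDimensional ℝ E]
  [MeasurableSpace E] [BorelSpace E] (μ : Measure E) [μ.IsAddHaarMeasure]

lemma exists_measureReal_closedBall_eq [Nontrivial E] {v : ℝ} (hv : 0 ≤ v) :
    ∃ r, 0 ≤ r ∧ μ.real (closedBall (0 : E) r) = v := by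
  have hd : finrank ℝ E ≠ 0 := finrank_pos.ne'
  have hunit : 0 < μ.real (ball (0 : E) 1) :=
    ENNReal.toReal_pos (measure_ball_pos μ 0 one_pos).ne' measure_ball_lt_top.ne
  have hr : 0 ≤ (v / μ.real (ball (0 : E) 1)) ^ ((finrank ℝ E : ℝ)⁻¹) := by positivity
  refine ⟨_, hr, ?_⟩
  rw [Measure.addHaar_real_closedBall μ _ hr, Real.rpow_inv_natCast_pow (by positivity) hd,
    div_mul_cancel₀ _ hunit.ne']

lemma measureReal_closedBall_mul {c r : ℝ} (hc : 0 ≤ c) (hr : 0 ≤ r) :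
    μ.real (closedBall (0 : E) (c * r)) = c ^ finrank ℝ E * μ.real (closedBall (0 : E) r) := by
  rw [Measure.addHaar_real_closedBall μ _ (mul_nonneg hc hr),
    Measure.addHaar_real_closedBall μ _ hr, mul_pow, mul_assoc]

lemma measureReal_closedBall_le_two_mul {ρ δ : ℝ} (hρ : 0 ≤ ρ) (hδ : δ ≤ 1)
    (hdδ : finrank ℝ E * δ ≤ 1 / 2) :
    μ.real (closedBall (0 : E) ρ) ≤ 2 * μ.real (closedBall (0 : E) ((1 - δ) * ρ)) := by
  rw [measureReal_closedBall_mul μ (sub_nonneg.2 hδ) hρ]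
  have hbernoulli := one_half_le_one_sub_pow (finrank ℝ E) hδ hdδ
  nlinarith [measureReal_nonneg (μ := μ) (s := closedBall (0 : E) ρ)]

end Ball

section Lens

variable {E : Type*} [NormedAddCommGroup E] [InnerProductSpace ℝ E]

lemma inner_sub_div_smul {x w : E} {s : ℝ} (hs : |⟪w, x⟫ - s| ≤ |⟪w, x⟫|) :
    ⟪w - (s / ‖x‖ ^ 2) • x, x⟫ = ⟪w, x⟫ - s := by
  rcases eq_or_ne x 0 with rfl | hx
  · simp_all
  · rw [inner_sub_left, real_inner_smul_left, real_inner_self_eq_norm_sq, div_mul_cancel₀]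
    positivity

lemma norm_sub_div_smul_le {x w : E} {s : ℝ} (hs : |⟪w, x⟫ - s| ≤ |⟪w, x⟫|) :
    ‖w - (s / ‖x‖ ^ 2) • x‖ ≤ ‖w‖ := by
  rcases eq_or_ne x 0 with rfl | hx
  · simp
  have hexpand : ‖w - (s / ‖x‖ ^ 2) • x‖ ^ 2 =
      ‖w‖ ^ 2 - (⟪w, x⟫ ^ 2 - (⟪w, x⟫ - s) ^ 2) / ‖x‖ ^ 2 := by
    rw [norm_sub_sq_real, real_inner_smul_right, norm_smul, mul_pow, Real.norm_eq_abs, sq_abs]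
    field_simp
    ring
  have hdecrease : 0 ≤ (⟪w, x⟫ ^ 2 - (⟪w, x⟫ - s) ^ 2) / ‖x‖ ^ 2 :=
    div_nonneg (sub_nonneg.2 (sq_le_sq.2 hs)) (sq_nonneg _)
  exact le_of_sq_le_sq (by linarith) (norm_nonneg _)

/-- The part of the ball of radius `ρ` about `0` within `ε / ‖x‖` of the hyperplane orthogonal
to `x` (the whole ball if `x = 0`). -/
def centralSlab (x : E) (ρ ε : ℝ) : Set E :=
  {w | ‖w‖ ≤ ρ ∧ |⟪w, x⟫| ≤ ε}

lemma centralSlab_subset_closedBall (x : E) (ρ ε : ℝ) : centralSlab x ρ ε ⊆ closedBall 0 ρ :=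
  fun _ hw ↦ mem_closedBall_zero_iff.2 hw.1

/-- Moving a point of the ball towards the hyperplane orthogonal to `x` by a multiple of `2 * ε`
keeps it in the ball. -/
lemma closedBall_subset_iUnion_preimage_centralSlab (x : E) {ρ ε : ℝ} (hε : 0 < ε) (K : ℕ)
    (hK : ρ * ‖x‖ ≤ 2 * K * ε) :
    closedBall 0 ρ ⊆ ⋃ k ∈ Icc (-K : ℤ) K,
      (fun w ↦ w - ((2 * ε * k) / ‖x‖ ^ 2) • x) ⁻¹' centralSlab x ρ ε := by
  intro w hw
  rw [mem_closedBall_zero_iff] at hw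
  set k := round (⟪w, x⟫ / (2 * ε))
  have hclose : |⟪w, x⟫ - 2 * ε * k| ≤ ε :=
    (abs_sub_mul_round_div_le_half (by positivity) _).trans_eq (by ring)
  have hdecrease : |⟪w, x⟫ - 2 * ε * k| ≤ |⟪w, x⟫| := by
    simpa using abs_sub_mul_round_div_le (by positivity : 0 < 2 * ε) ⟪w, x⟫ 0
  have hk : |k| ≤ K := by
    have hinner : |⟪w, x⟫| ≤ 2 * K * ε :=
      ((abs_real_inner_le_norm w x).trans (by gcongr)).trans hK
    have htriangle := abs_sub_abs_le_abs_sub (2 * ε * k) ⟪w, x⟫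
    rw [abs_sub_comm, abs_mul, abs_of_pos (by positivity : 0 < 2 * ε)] at htriangle
    have hlt : (|k| : ℝ) < K + 1 := by nlinarith
    exact_mod_cast Int.lt_add_one_iff.1 (by exact_mod_cast hlt)
  refine Set.mem_iUnion₂.2 ⟨k, mem_Icc.2 (abs_le.1 hk), ?_, ?_⟩
  · exact (norm_sub_div_smul_le hdecrease).trans hw
  · rwa [inner_sub_div_smul hdecrease]

lemma centralSlab_subset_preimage_inter_closedBall {x y : E} {R ρ ε : ℝ} (hR : 0 ≤ R)
    (hxy : dist x y ≤ R) (hρε : ρ ^ 2 + ε ≤ 3 / 4 * R ^ 2) :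
    centralSlab (y - x) ρ ε ⊆
      (fun w ↦ midpoint ℝ x y + w) ⁻¹' (closedBall x R ∩ closedBall y R) := by
  rintro w ⟨hw, hinner⟩
  rw [dist_comm, dist_eq_norm] at hxy
  have hhalf : ‖(1 / 2 : ℝ) • (y - x)‖ ^ 2 ≤ R ^ 2 / 4 := by
    rw [norm_smul, mul_pow]
    norm_num
    nlinarith [norm_nonneg (y - x)]
  have hwsq : ‖w‖ ^ 2 ≤ ρ ^ 2 := by gcongr
  have hwx : midpoint ℝ x y + w - x = w + (1 / 2 : ℝ) • (y - x) := by
    rw [midpoint_eq_smul_add, invOf_eq_inv]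
    module
  have hwy : midpoint ℝ x y + w - y = w - (1 / 2 : ℝ) • (y - x) := by
    rw [midpoint_eq_smul_add, invOf_eq_inv]
    module
  rw [Set.mem_preimage, Set.mem_inter_iff, mem_closedBall_iff_norm, mem_closedBall_iff_norm, hwx,
    hwy]
  have hbounds := abs_le.1 hinner
  constructor <;> refine le_of_sq_le_sq ?_ hR
  · rw [norm_add_sq_real, real_inner_smul_right]
    linarith
  · rw [norm_sub_sq_real, real_inner_smul_right]
    linarith

variable [FiniteDimensional ℝ E] [MeasurableSpace E] [BorelSpace E] (μ : Measure E)
  [μ.IsAddHaarMeasure]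

lemma measureReal_closedBall_le_mul_centralSlab (x : E) {ρ ε : ℝ} (hε : 0 < ε) (K : ℕ)
    (hK : ρ * ‖x‖ ≤ 2 * K * ε) :
    μ.real (closedBall 0 ρ) ≤ (2 * K + 1) * μ.real (centralSlab x ρ ε) := by
  have hμ (k : ℤ) : μ ((fun w ↦ w - ((2 * ε * k) / ‖x‖ ^ 2) • x) ⁻¹' centralSlab x ρ ε) =
      μ (centralSlab x ρ ε) := by
    simp only [sub_eq_add_neg, measure_preimage_add_right]
  have hfinite : μ (centralSlab x ρ ε) < ⊤ :=
    (measure_mono (centralSlab_subset_closedBall x ρ ε)).trans_lt measure_closedBall_lt_top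
  calc
    _ ≤ μ.real (⋃ k ∈ Icc (-K : ℤ) K,
        (fun w ↦ w - ((2 * ε * k) / ‖x‖ ^ 2) • x) ⁻¹' centralSlab x ρ ε) :=
      measureReal_mono (closedBall_subset_iUnion_preimage_centralSlab x hε K hK)
        (measure_biUnion_lt_top (finite_toSet _) fun k _ ↦ by rwa [hμ]).ne
    _ ≤ ∑ k ∈ Icc (-K : ℤ) K,
        μ.real ((fun w ↦ w - ((2 * ε * k) / ‖x‖ ^ 2) • x) ⁻¹' centralSlab x ρ ε) :=
      measureReal_biUnion_finset_le _ _
    _ = (2 * K + 1) * μ.real (centralSlab x ρ ε) := by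
      simp only [measureReal_def, hμ, sum_const, Int.card_Icc, nsmul_eq_mul]
      congr 1
      rw [show ((K : ℤ) + 1 - -K).toNat = 2 * K + 1 by omega]
      push_cast
      rfl

lemma measureReal_centralSlab_le_inter_closedBall {x y : E} {R ρ ε : ℝ} (hR : 0 ≤ R)
    (hxy : dist x y ≤ R) (hρε : ρ ^ 2 + ε ≤ 3 / 4 * R ^ 2) :
    μ.real (centralSlab (y - x) ρ ε) ≤ μ.real (closedBall x R ∩ closedBall y R) := by
  have hfinite : μ (closedBall x R ∩ closedBall y R) ≠ ⊤ :=
    measure_ne_top_of_subset Set.inter_subset_left measure_closedBall_lt_top.ne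
  calc
    _ ≤ μ.real ((fun w ↦ midpoint ℝ x y + w) ⁻¹' (closedBall x R ∩ closedBall y R)) :=
      measureReal_mono (centralSlab_subset_preimage_inter_closedBall hR hxy hρε)
        (by rwa [measure_preimage_add])
    _ = μ.real (closedBall x R ∩ closedBall y R) := by
      rw [measureReal_def, measure_preimage_add, ← measureReal_def]

/-- The lens contains the points near the hyperplane bisecting `x` and `y` and at distance slightly
less than `√3 / 2 * R` from their midpoint. Shrinking the radius by `1 - δ` with
`δ = 1 / (2 * finrank ℝ E)` makes room for a slab of positive width and costs a factor of at most
`2` in volume. -/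
lemma measureReal_closedBall_le_mul_inter_closedBall [Nontrivial E] {x y : E} {R : ℝ} (hR : 0 < R)
    (hxy : dist x y ≤ R) :
    μ.real (closedBall 0 (√3 / 2 * R)) ≤
      10 * finrank ℝ E * μ.real (closedBall x R ∩ closedBall y R) := by
  set d := finrank ℝ E
  have hd : (1 : ℝ) ≤ d := by exact_mod_cast finrank_pos (R := ℝ) (M := E)
  set δ : ℝ := 1 / (2 * d) with hδ
  have hδd : d * δ = 1 / 2 := by rw [hδ]; field_simp
  have hδ0 : 0 < δ := by positivity
  have hδ1 : δ ≤ 1 / 2 := by nlinarith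
  set ρ := √3 / 2 * R with hρ
  have hρ0 : 0 < ρ := by positivity
  have hρsq : ρ ^ 2 = 3 / 4 * R ^ 2 := by
    rw [hρ, mul_pow, div_pow, Real.sq_sqrt (by norm_num)]
    norm_num
  have hshrink : μ.real (closedBall 0 ρ) ≤ 2 * μ.real (closedBall 0 ((1 - δ) * ρ)) :=
    measureReal_closedBall_le_two_mul μ hρ0.le (by linarith) hδd.le
  have hslab : μ.real (closedBall 0 ((1 - δ) * ρ)) ≤
      (2 * (2 * d : ℕ) + 1) * μ.real (centralSlab (y - x) ((1 - δ) * ρ) (ρ ^ 2 * δ)) := by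
    refine measureReal_closedBall_le_mul_centralSlab μ _ (by positivity) (2 * d) ?_
    rw [dist_comm, dist_eq_norm] at hxy
    have hρR : ρ ≤ R := by nlinarith
    calc
      (1 - δ) * ρ * ‖y - x‖ ≤ 1 * R * R := by gcongr; linarith
      _ ≤ 2 * ρ ^ 2 := by rw [hρsq]; nlinarith
      _ = 2 * (2 * d : ℕ) * (ρ ^ 2 * δ) := by push_cast; linear_combination (-4 * ρ ^ 2) * hδd
  have hlens := measureReal_centralSlab_le_inter_closedBall μ (ρ := (1 - δ) * ρ) (ε := ρ ^ 2 * δ)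
    hR.le hxy (by rw [← hρsq]; nlinarith [sq_nonneg ρ])
  calc
    _ ≤ 2 * ((2 * (2 * d : ℕ) + 1) * μ.real (closedBall x R ∩ closedBall y R)) := by
      refine hshrink.trans ?_
      gcongr
      exact hslab.trans (by gcongr)
    _ ≤ 10 * d * μ.real (closedBall x R ∩ closedBall y R) := by
      rw [← mul_assoc]
      exact mul_le_mul_of_nonneg_right (by push_cast; linarith) measureReal_nonneg

end Lens

section Lattice

variable {ι : Type*}

/-- The embedding of the integer lattice `ℤ^ι` into Euclidean space. -/
def intVec : (ι → ℤ) →+ EuclideanSpace ℝ ι where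
  toFun z := WithLp.toLp 2 fun i ↦ (z i : ℝ)
  map_zero' := by ext; simp
  map_add' x y := by ext; simp

@[simp]
lemma intVec_apply (z : ι → ℤ) (i : ι) : intVec z i = z i := rfl

lemma intVec_injective : Function.Injective (intVec (ι := ι)) := fun x y h ↦ by
  ext i
  simpa using congrArg (fun u : EuclideanSpace ℝ ι ↦ u i) h

/-- The coordinatewise nearest lattice point; its fibres are the unit cubes centred at the lattice
points. -/
noncomputable def latticeRound (u : EuclideanSpace ℝ ι) : ι → ℤ :=
  fun i ↦ round (u i)

lemma latticeRound_preimage_singleton (z : ι → ℤ) :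
    latticeRound ⁻¹' {z} = WithLp.ofLp (p := 2) ⁻¹'
      Set.univ.pi fun i ↦ Set.Ico (z i - 1 / 2 : ℝ) (z i + 1 / 2) := by
  ext u
  simp [latticeRound, funext_iff, round_eq_iff]

lemma measurableSet_latticeRound_preimage_singleton [Countable ι] (z : ι → ℤ) :
    MeasurableSet (latticeRound ⁻¹' {z}) := by
  rw [latticeRound_preimage_singleton]
  exact WithLp.measurable_ofLp _ _ (MeasurableSet.univ_pi fun i ↦ measurableSet_Ico)

variable [Fintype ι]

lemma norm_le_sqrt_card_mul {u : EuclideanSpace ℝ ι} {s : ℝ} (hu : ∀ i, |u i| ≤ s) :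
    ‖u‖ ≤ √(Fintype.card ι) * s := by
  rcases isEmpty_or_nonempty ι with _ | ⟨⟨i₀⟩⟩
  · simp [EuclideanSpace.norm_eq]
  have hs : 0 ≤ s := (abs_nonneg _).trans (hu i₀)
  rw [EuclideanSpace.norm_eq, ← Real.sqrt_sq hs, ← Real.sqrt_mul (Nat.cast_nonneg _)]
  refine Real.sqrt_le_sqrt ?_
  simpa using sum_le_card_nsmul univ (fun i ↦ ‖u i‖ ^ 2) (s ^ 2) fun i _ ↦
    pow_le_pow_left₀ (norm_nonneg _) (hu i) 2

lemma volumeReal_ofLp_preimage_closedBall {r : ℝ} (hr : 0 ≤ r) :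
    volume.real (WithLp.ofLp (p := 2) ⁻¹' closedBall (0 : ι → ℝ) r) =
      (2 * r) ^ Fintype.card ι := by
  rw [measureReal_def, (PiLp.volume_preserving_ofLp ι).measure_preimage
    isClosed_closedBall.measurableSet.nullMeasurableSet, Real.volume_pi_closedBall _ hr,
    ENNReal.toReal_ofReal (by positivity)]

lemma volumeReal_closedBall_le {r : ℝ} (hr : 0 ≤ r) :
    volume.real (closedBall (0 : EuclideanSpace ℝ ι) r) ≤ (2 * r) ^ Fintype.card ι := by
  rw [← volumeReal_ofLp_preimage_closedBall hr]
  refine measureReal_mono (fun u hu ↦ ?_) ?_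
  · rw [mem_closedBall_zero_iff] at hu
    rw [Set.mem_preimage, mem_closedBall_zero_iff, pi_norm_le_iff_of_nonneg hr]
    exact fun i ↦ (PiLp.norm_apply_le u i).trans hu
  · rw [(PiLp.volume_preserving_ofLp ι).measure_preimage
      isClosed_closedBall.measurableSet.nullMeasurableSet]
    exact measure_closedBall_lt_top.ne

lemma le_volumeReal_closedBall {s : ℝ} (hs : 0 ≤ s) :
    (2 * s) ^ Fintype.card ι ≤
      volume.real (closedBall (0 : EuclideanSpace ℝ ι) (√(Fintype.card ι) * s)) := by
  rw [← volumeReal_ofLp_preimage_closedBall hs]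
  refine measureReal_mono (fun u hu ↦ ?_) measure_closedBall_lt_top.ne
  rw [Set.mem_preimage, mem_closedBall_zero_iff, pi_norm_le_iff_of_nonneg hs] at hu
  exact mem_closedBall_zero_iff.2 (norm_le_sqrt_card_mul hu)

lemma exists_natCast_eq_norm_intVec_sq (z : ι → ℤ) : ∃ k : ℕ, (k : ℝ) = ‖intVec z‖ ^ 2 := by
  refine ⟨∑ i, (z i).natAbs ^ 2, ?_⟩
  simp [EuclideanSpace.norm_sq_eq, Nat.cast_natAbs]

lemma norm_sub_intVec_latticeRound_le (u : EuclideanSpace ℝ ι) :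
    ‖u - intVec (latticeRound u)‖ ≤ √(Fintype.card ι) / 2 := by
  rw [div_eq_mul_one_div]
  exact norm_le_sqrt_card_mul fun i ↦ abs_sub_round (u i)

lemma volume_latticeRound_preimage_singleton (z : ι → ℤ) :
    volume (latticeRound ⁻¹' {z}) = 1 := by
  rw [latticeRound_preimage_singleton, (PiLp.volume_preserving_ofLp ι).measure_preimage
    (MeasurableSet.univ_pi fun i ↦ measurableSet_Ico).nullMeasurableSet, Real.volume_pi_Ico]
  simp only [add_sub_sub_cancel, add_halves, ENNReal.ofReal_one, prod_const_one]

lemma volume_latticeRound_preimage (S : Finset (ι → ℤ)) :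
    volume (latticeRound ⁻¹' (S : Set (ι → ℤ))) = #S := by
  rw [← sum_measure_preimage_singleton S fun z _ ↦
    measurableSet_latticeRound_preimage_singleton z]
  simp [volume_latticeRound_preimage_singleton]

lemma volumeReal_latticeRound_preimage (S : Finset (ι → ℤ)) :
    volume.real (latticeRound ⁻¹' (S : Set (ι → ℤ))) = #S := by
  rw [measureReal_def, volume_latticeRound_preimage, ENNReal.toReal_natCast]

lemma volumeReal_le_card {A : Set (EuclideanSpace ℝ ι)} {S : Finset (ι → ℤ)}
    (hA : ∀ u ∈ A, latticeRound u ∈ S) : volume.real A ≤ #S := by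
  rw [← volumeReal_latticeRound_preimage]
  exact measureReal_mono hA (by simp [volume_latticeRound_preimage])

lemma finite_norm_intVec_le (r : ℝ) : {z : ι → ℤ | ‖intVec z‖ ≤ r}.Finite := by
  classical
  refine (Set.finite_Icc (fun _ ↦ -⌊r⌋ : ι → ℤ) fun _ ↦ ⌊r⌋).subset fun z hz ↦ ?_
  have hcoord (i : ι) : |z i| ≤ ⌊r⌋ := by
    rw [Int.le_floor]
    simpa using (PiLp.norm_apply_le (intVec z) i).trans hz
  exact ⟨fun i ↦ (abs_le.1 (hcoord i)).1, fun i ↦ (abs_le.1 (hcoord i)).2⟩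

/-- The lattice points of norm at most `r`. -/
noncomputable def latticeBall (ι : Type*) [Fintype ι] (r : ℝ) : Finset (ι → ℤ) :=
  (finite_norm_intVec_le r).toFinset

@[simp]
lemma mem_latticeBall {r : ℝ} {z : ι → ℤ} : z ∈ latticeBall ι r ↔ ‖intVec z‖ ≤ r := by
  simp [latticeBall]

lemma card_latticeBall_le (r : ℝ) :
    #(latticeBall ι r) ≤
      volume.real (closedBall (0 : EuclideanSpace ℝ ι) (r + √(Fintype.card ι) / 2)) := by
  rw [← volumeReal_latticeRound_preimage]
  refine measureReal_mono (fun u hu ↦ ?_) measure_closedBall_lt_top.ne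
  rw [mem_closedBall_zero_iff]
  exact (norm_le_norm_add_norm_sub' u (intVec (latticeRound u))).trans
    (add_le_add (mem_latticeBall.1 hu) (norm_sub_intVec_latticeRound_le u))

lemma latticeRound_mem_latticeBall {r : ℝ} {u : EuclideanSpace ℝ ι}
    (hu : ‖u‖ ≤ r - √(Fintype.card ι) / 2) : latticeRound u ∈ latticeBall ι r := by
  rw [mem_latticeBall]
  linarith [norm_le_norm_add_norm_sub u (intVec (latticeRound u)),
    norm_sub_intVec_latticeRound_le u]

lemma volumeReal_closedBall_le_card_latticeBall (r : ℝ) :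
    volume.real (closedBall (0 : EuclideanSpace ℝ ι) (r - √(Fintype.card ι) / 2)) ≤
      #(latticeBall ι r) :=
  volumeReal_le_card fun _ hu ↦ latticeRound_mem_latticeBall (mem_closedBall_zero_iff.1 hu)

lemma volumeReal_inter_closedBall_le_card_filter (r : ℝ) (x : ι → ℤ) :
    volume.real (closedBall (0 : EuclideanSpace ℝ ι) (r - √(Fintype.card ι) / 2) ∩
      closedBall (-intVec x) (r - √(Fintype.card ι) / 2)) ≤
      #{y ∈ latticeBall ι r | -(x + y) ∈ latticeBall ι r} := by
  refine volumeReal_le_card fun u hu ↦ mem_filter.2 ⟨?_, ?_⟩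
  · exact latticeRound_mem_latticeBall (mem_closedBall_zero_iff.1 hu.1)
  · have hux := mem_closedBall_iff_norm.1 hu.2
    rw [sub_neg_eq_add] at hux
    have htriangle := norm_sub_le (u + intVec x) (u - intVec (latticeRound u))
    rw [add_sub_sub_cancel] at htriangle
    rw [mem_latticeBall, map_neg, norm_neg, map_add]
    linarith [norm_sub_intVec_latticeRound_le u]

/-- For `x` fixed, the points `y` with `y` and `-(x + y)` in the ball form the lens cut out by the
balls about `0` and `-x`. -/
lemma mul_volumeReal_closedBall_le_card_zeroSumPairs [Nonempty ι] {r : ℝ}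
    (hr : √(Fintype.card ι) / 2 < r) :
    volume.real (closedBall (0 : EuclideanSpace ℝ ι) (r - √(Fintype.card ι))) *
      volume.real (closedBall (0 : EuclideanSpace ℝ ι) (√3 / 2 * (r - √(Fintype.card ι) / 2))) ≤
      10 * Fintype.card ι * #(zeroSumPairs (latticeBall ι r)) := by
  set s := √(Fintype.card ι : ℝ)
  set L := volume.real (closedBall (0 : EuclideanSpace ℝ ι) (√3 / 2 * (r - s / 2)))
  have hsubset : latticeBall ι (r - s / 2) ⊆ latticeBall ι r := fun z hz ↦ by
    rw [mem_latticeBall] at hz ⊢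
    linarith [Real.sqrt_nonneg (Fintype.card ι : ℝ)]
  have hfibre (x : ι → ℤ) (hx : x ∈ latticeBall ι (r - s / 2)) :
      L ≤ 10 * Fintype.card ι * #{y ∈ latticeBall ι r | -(x + y) ∈ latticeBall ι r} := by
    refine (measureReal_closedBall_le_mul_inter_closedBall volume (x := 0) (y := -intVec x)
      (sub_pos.2 hr) ?_).trans ?_
    · rwa [dist_zero_left, norm_neg, ← mem_latticeBall]
    · rw [finrank_euclideanSpace]
      gcongr
      exact volumeReal_inter_closedBall_le_card_filter r x
  calc
    _ ≤ #(latticeBall ι (r - s / 2)) * L := by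
      gcongr
      refine (congrArg _ ?_).trans_le (volumeReal_closedBall_le_card_latticeBall (r - s / 2))
      congr 1
      ring
    _ ≤ ∑ x ∈ latticeBall ι (r - s / 2),
        10 * Fintype.card ι * (#{y ∈ latticeBall ι r | -(x + y) ∈ latticeBall ι r} : ℝ) := by
      rw [← nsmul_eq_mul]
      exact card_nsmul_le_sum _ _ _ hfibre
    _ ≤ ∑ x ∈ latticeBall ι r,
        10 * Fintype.card ι * (#{y ∈ latticeBall ι r | -(x + y) ∈ latticeBall ι r} : ℝ) :=
      sum_le_sum_of_subset_of_nonneg hsubset fun _ _ _ ↦ by positivity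
    _ = 10 * Fintype.card ι * #(zeroSumPairs (latticeBall ι r)) := by
      rw [← mul_sum, card_zeroSumPairs]
      push_cast
      rfl

lemma pow_mul_sq_volumeReal_closedBall_le_card_zeroSumPairs [Nonempty ι] {t : ℝ}
    (ht : 3 * Fintype.card ι * √(Fintype.card ι) ≤ t) :
    (√3 / 2) ^ Fintype.card ι * volume.real (closedBall (0 : EuclideanSpace ℝ ι) t) ^ 2 ≤
      40 * Fintype.card ι * #(zeroSumPairs (latticeBall ι (t - √(Fintype.card ι) / 2))) := by
  set d := Fintype.card ι
  set s := √(d : ℝ)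
  set vol : ℝ → ℝ := fun r ↦ volume.real (closedBall (0 : EuclideanSpace ℝ ι) r)
  have hd1 : (1 : ℝ) ≤ d := by exact_mod_cast Fintype.card_pos
  have hs : 0 < s := by positivity
  have ht0 : 0 < t := lt_of_lt_of_le (by positivity) ht
  have hshrink {u : ℝ} (hu : u ≤ 3 / 2 * s) : vol t ≤ 2 * vol (t - u) := by
    have hδ : d * (u / t) ≤ 1 / 2 := by
      rw [← mul_div_assoc, div_le_iff₀ ht0]
      nlinarith
    have hδ1 : u / t ≤ 1 := (div_le_one₀ ht0).2 (by nlinarith)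
    convert measureReal_closedBall_le_two_mul (E := EuclideanSpace ℝ ι) volume ht0.le hδ1 ?_ using 4
    · field_simp
    · rwa [finrank_euclideanSpace]
  have hscale : vol (√3 / 2 * (t - s)) = (√3 / 2) ^ d * vol (t - s) := by
    simpa only [finrank_euclideanSpace] using measureReal_closedBall_mul
      (volume : Measure (EuclideanSpace ℝ ι)) (c := √3 / 2) (r := t - s) (by positivity)
      (by nlinarith)
  have hpairs : vol (t - 3 / 2 * s) * vol (√3 / 2 * (t - s)) ≤
      10 * d * #(zeroSumPairs (latticeBall ι (t - s / 2))) := by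
    have h := mul_volumeReal_closedBall_le_card_zeroSumPairs (ι := ι) (r := t - s / 2)
      (by nlinarith)
    rwa [show t - s / 2 - √(Fintype.card ι) = t - 3 / 2 * s by ring,
      show t - s / 2 - √(Fintype.card ι) / 2 = t - s by ring] at h
  calc
    (√3 / 2) ^ d * vol t ^ 2 ≤ (√3 / 2) ^ d * (2 * vol (t - 3 / 2 * s) * (2 * vol (t - s))) := by
      rw [sq]
      gcongr <;> exact hshrink (by linarith)
    _ = 4 * (vol (t - 3 / 2 * s) * vol (√3 / 2 * (t - s))) := by
      rw [hscale]
      ring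
    _ ≤ 40 * d * #(zeroSumPairs (latticeBall ι (t - s / 2))) := by linarith

lemma card_zeroSumPairs_latticeBall_le {r : ℝ} {n : ℕ} (hn : #(latticeBall ι r) ≤ n) :
    (#(zeroSumPairs (latticeBall ι r)) : ℝ) ≤ (4 * r ^ 2 + 1) * (3 * n ^ 2 * eta (3 * n)) := by
  let T : Finset ℝ := (range (⌊4 * r ^ 2⌋₊ + 1)).image fun k : ℕ ↦ √k
  have hT (x) (hx : x ∈ latticeBall ι r) (y) (hy : y ∈ latticeBall ι r) :
      ‖intVec x - intVec y‖ ∈ T := by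
    obtain ⟨k, hk⟩ := exists_natCast_eq_norm_intVec_sq (x - y)
    rw [map_sub] at hk
    rw [mem_latticeBall] at hx hy
    refine mem_image.2 ⟨k, mem_range.2 (Nat.lt_succ_of_le (Nat.le_floor ?_)), ?_⟩
    · have hnorm : ‖intVec x - intVec y‖ ≤ 2 * r := (norm_sub_le _ _).trans (by linarith)
      rw [hk]
      nlinarith [norm_nonneg (intVec x - intVec y)]
    · rw [hk, Real.sqrt_sq (norm_nonneg _)]
  have hcard : (#T : ℝ) ≤ 4 * r ^ 2 + 1 := by
    calc
      (#T : ℝ) ≤ ⌊4 * r ^ 2⌋₊ + 1 := by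
        exact_mod_cast card_image_le.trans_eq (card_range _)
      _ ≤ 4 * r ^ 2 + 1 := by
        gcongr
        exact Nat.floor_le (by positivity)
  have heta : 0 ≤ eta (3 * n) := eta_nonneg _
  exact (card_zeroSumPairs_le_mul_eta intVec intVec_injective hT hn).trans (by gcongr)

lemma pow_le_mul_sq_mul_eta_of_volumeReal_closedBall [Nonempty ι] {t : ℝ} {n : ℕ} (hn : 1 ≤ n)
    (ht : 3 * Fintype.card ι * √(Fintype.card ι) ≤ t)
    (hvolume : volume.real (closedBall (0 : EuclideanSpace ℝ ι) t) = n) :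
    (√3 / 2) ^ Fintype.card ι ≤ 480 * Fintype.card ι * t ^ 2 * eta (3 * n) := by
  set d := Fintype.card ι
  have hd : (1 : ℝ) ≤ d := by exact_mod_cast Fintype.card_pos
  have hsqrt : 1 ≤ √(d : ℝ) := Real.one_le_sqrt.2 hd
  have hsqrt_le : √(d : ℝ) ≤ t := le_trans (by nlinarith) ht
  have hdistances : 4 * (t - √d / 2) ^ 2 + 1 ≤ 4 * t ^ 2 := by nlinarith
  have hcard : #(latticeBall ι (t - √d / 2)) ≤ n := by
    have h := card_latticeBall_le (ι := ι) (t - √d / 2)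
    rw [sub_add_cancel, hvolume] at h
    exact_mod_cast h
  have heta := eta_nonneg (3 * n)
  refine le_of_mul_le_mul_right (a := (n : ℝ) ^ 2) ?_ (by positivity)
  calc
    (√3 / 2) ^ d * (n : ℝ) ^ 2 ≤ 40 * d * #(zeroSumPairs (latticeBall ι (t - √d / 2))) := by
      rw [← hvolume]
      exact pow_mul_sq_volumeReal_closedBall_le_card_zeroSumPairs ht
    _ ≤ 40 * d * (4 * t ^ 2 * (3 * n ^ 2 * eta (3 * n))) := by
      gcongr
      exact (card_zeroSumPairs_latticeBall_le hcard).trans (by gcongr)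
    _ = 480 * d * t ^ 2 * eta (3 * n) * n ^ 2 := by ring

end Lattice

lemma pow_le_mul_sq_mul_eta_of_le {D n : ℕ} {a : ℝ} (hD : 1 ≤ D) (hn : 1 ≤ n)
    (ha : 6 * D ^ 2 ≤ a) (han : a ^ D = n) :
    (√3 / 2) ^ D ≤ 120 * D ^ 2 * a ^ 2 * eta (3 * n) := by
  have hD1 : (1 : ℝ) ≤ D := by exact_mod_cast hD
  have hD0 : D ≠ 0 := by omega
  have : NeZero D := ⟨hD0⟩
  have hsqrt : √(D : ℝ) ^ 2 = D := Real.sq_sqrt (Nat.cast_nonneg D)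
  obtain ⟨t, ht0, ht⟩ := exists_measureReal_closedBall_eq
    (volume : Measure (EuclideanSpace ℝ (Fin D))) (Nat.cast_nonneg n)
  have hat : a ≤ 2 * t := by
    refine le_of_pow_le_pow_left₀ hD0 (by positivity) ?_
    simpa only [ht, han, Fintype.card_fin] using volumeReal_closedBall_le (ι := Fin D) ht0
  have hta : 2 * t ≤ a * √D := by
    rw [← div_le_iff₀ (by positivity), mul_div_assoc]
    refine le_of_pow_le_pow_left₀ hD0 (le_trans (by positivity) ha) ?_
    have hcube := le_volumeReal_closedBall (ι := Fin D) (s := t / √D) (by positivity)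
    rwa [Fintype.card_fin, mul_div_cancel₀ t (by positivity : √(D : ℝ) ≠ 0), ht, ← han] at hcube
  have hlarge : 3 * D * √(D : ℝ) ≤ t := by nlinarith [Real.one_le_sqrt.2 hD1]
  have heta := eta_nonneg (3 * n)
  calc
    (√3 / 2) ^ D ≤ 480 * D * t ^ 2 * eta (3 * n) := by
      simpa only [Fintype.card_fin] using pow_le_mul_sq_mul_eta_of_volumeReal_closedBall hn
        (by rwa [Fintype.card_fin]) ht
    _ = 120 * D * (2 * t) ^ 2 * eta (3 * n) := by ring
    _ ≤ 120 * D * (a * √D) ^ 2 * eta (3 * n) := by gcongr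
    _ = 120 * D ^ 2 * a ^ 2 * eta (3 * n) := by
      rw [mul_pow, hsqrt]
      ring

lemma one_le_three_mul_sq_mul_eta {n : ℕ} (hn : 1 ≤ n) : 1 ≤ 3 * (n : ℝ) ^ 2 * eta (3 * n) := by
  have hpairs : zeroSumPairs ({0} : Finset ℝ) = {(0, 0)} := by
    ext ⟨a, b⟩
    simp +contextual [zeroSumPairs]
  simpa [hpairs] using card_zeroSumPairs_le_mul_eta (AddMonoidHom.id ℝ) Function.injective_id
    (S := {0}) (T := {0}) (by simp) hn

/-- Between the ranges in which dimensions `D` and `D + 1` are efficient, dimension `D` loses only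
a polynomial factor. -/
lemma pow_le_mul_eta_of_le_of_lt {D n : ℕ} (hD : 1 ≤ D) (hn : 1 ≤ n)
    (hle : (6 * D ^ 2 : ℝ) ^ D ≤ n) (hlt : n < (6 * (D + 1) ^ 2 : ℝ) ^ (D + 1)) :
    (√3 / 2) ^ D ≤ 155520 * (D + 1 : ℝ) ^ 10 * eta (3 * n) := by
  have heta := eta_nonneg (3 * n)
  have hD0 : D ≠ 0 := by omega
  set a := (n : ℝ) ^ (D : ℝ)⁻¹
  have han : a ^ D = n := Real.rpow_inv_natCast_pow n.cast_nonneg hD0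
  have ha : 6 * (D : ℝ) ^ 2 ≤ a :=
    le_of_pow_le_pow_left₀ hD0 (by positivity) (hle.trans_eq han.symm)
  have ha' : a ≤ (6 * (D + 1 : ℝ) ^ 2) ^ 2 := by
    refine le_of_pow_le_pow_left₀ hD0 (by positivity) ?_
    rw [han, ← pow_mul]
    refine hlt.le.trans (pow_le_pow_right₀ ?_ (by omega))
    nlinarith [D.cast_nonneg (α := ℝ)]
  calc
    (√3 / 2) ^ D ≤ 120 * D ^ 2 * a ^ 2 * eta (3 * n) := pow_le_mul_sq_mul_eta_of_le hD hn ha han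
    _ ≤ 120 * (D + 1) ^ 2 * ((6 * (D + 1 : ℝ) ^ 2) ^ 2) ^ 2 * eta (3 * n) := by
      gcongr
      linarith
    _ = 155520 * (D + 1) ^ 10 * eta (3 * n) := by ring

lemma pow_le_mul_eta_of_lt {D : ℕ} (hD : 1 ≤ D) :
    ∀ n : ℕ, 1 ≤ n → n < (6 * D ^ 2 : ℝ) ^ D →
      (√3 / 2) ^ D ≤ 155520 * (D : ℝ) ^ 10 * eta (3 * n) := by
  have hsqrt : √3 / 2 ≤ 1 := by
    rw [div_le_one₀ two_pos, Real.sqrt_le_left two_pos.le]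
    norm_num
  induction D, hD using Nat.le_induction with
  | base =>
    intro n hn hn6
    have hn6' : (n : ℝ) ≤ 6 := by simpa using hn6.le
    have heta := eta_nonneg (3 * n)
    calc
      (√3 / 2) ^ 1 ≤ 1 := by rwa [pow_one]
      _ ≤ 3 * (n : ℝ) ^ 2 * eta (3 * n) := one_le_three_mul_sq_mul_eta hn
      _ ≤ 3 * 6 ^ 2 * eta (3 * n) := by gcongr
      _ ≤ 155520 * ((1 : ℕ) : ℝ) ^ 10 * eta (3 * n) := by
        refine mul_le_mul_of_nonneg_right ?_ heta
        norm_num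
  | succ D hD ih =>
    intro n hn hlt
    have heta := eta_nonneg (3 * n)
    refine (pow_le_pow_of_le_one (by positivity) hsqrt D.le_succ).trans ?_
    rcases lt_or_ge (n : ℝ) ((6 * D ^ 2) ^ D) with hsmall | hlarge
    · refine (ih n hn hsmall).trans ?_
      gcongr
      exact D.le_succ
    · rw [Nat.cast_succ] at hlt ⊢
      exact pow_le_mul_eta_of_le_of_lt hD hn hlarge hlt

lemma pow_le_mul_sq_mul_eta {D n : ℕ} {a : ℝ} (hD : 1 ≤ D) (hn : 1 ≤ n) (ha : 0 ≤ a)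
    (han : a ^ D = n) : (√3 / 2) ^ D ≤ 155520 * D ^ 10 * a ^ 2 * eta (3 * n) := by
  have hD1 : (1 : ℝ) ≤ D := by exact_mod_cast hD
  have hD0 : D ≠ 0 := by omega
  have heta := eta_nonneg (3 * n)
  rcases lt_or_ge a (6 * D ^ 2) with hsmall | hlarge
  · have hlt : (n : ℝ) < (6 * D ^ 2) ^ D := han ▸ pow_lt_pow_left₀ hsmall ha hD0
    have ha1 : 1 ≤ a := by
      rw [← one_le_pow_iff_of_nonneg ha hD0, han]
      exact_mod_cast hn
    refine (pow_le_mul_eta_of_lt hD n hn hlt).trans ?_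
    refine mul_le_mul_of_nonneg_right ?_ heta
    exact le_mul_of_one_le_right (by positivity) (one_le_pow₀ ha1)
  · refine (pow_le_mul_sq_mul_eta_of_le hD hn hlarge han).trans ?_
    gcongr
    · norm_num
    · norm_num

theorem stmt_0_general :
    ∃ c K : ℝ, 0 < c ∧ 0 < K ∧ ∀ D n : ℕ, 1 ≤ D → 1 ≤ n →
      c * (D : ℝ) ^ (-K) * ((3 : ℝ) / 4) ^ ((D : ℝ) / 2) * (n : ℝ) ^ (-(2 / (D : ℝ)))
        ≤ eta (3 * n) := by
  refine ⟨1 / 155520, (10 : ℕ), by norm_num, by norm_num, fun D n hD hn ↦ ?_⟩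
  have hD0 : (0 : ℝ) < D := by exact_mod_cast hD
  have hn0 : (0 : ℝ) < n := by exact_mod_cast hn
  set a := (n : ℝ) ^ (D : ℝ)⁻¹ with ha
  have han : a ^ D = n := Real.rpow_inv_natCast_pow hn0.le (by omega)
  have ha0 : 0 < a := by positivity
  have hn_rpow : (n : ℝ) ^ (-(2 / (D : ℝ))) = (a ^ 2)⁻¹ := by
    rw [Real.rpow_neg hn0.le, ha, ← Real.rpow_mul_natCast hn0.le]
    congr 2
    push_cast
    ring
  have hsqrt : ((3 : ℝ) / 4) ^ ((D : ℝ) / 2) = (√3 / 2) ^ D := by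
    rw [Real.rpow_div_two_eq_sqrt _ (by norm_num), Real.rpow_natCast, Real.sqrt_div (by norm_num),
      show (4 : ℝ) = 2 ^ 2 by norm_num, Real.sqrt_sq two_pos.le]
  rw [hn_rpow, hsqrt, Real.rpow_neg hD0.le, Real.rpow_natCast]
  have hmain := pow_le_mul_sq_mul_eta hD hn ha0.le han
  rw [show 1 / 155520 * ((D : ℝ) ^ 10)⁻¹ * (√3 / 2) ^ D * (a ^ 2)⁻¹ =
    (√3 / 2) ^ D / (155520 * D ^ 10 * a ^ 2) by field_simp, div_le_iff₀' (by positivity)]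
  exact hmain

theorem stmt_0 :
    ∃ c K : ℝ, 0 < c ∧ 0 < K ∧ ∀ D n : ℕ, 1 ≤ D → (2 * D) ^ (100 * D) < n →
      c * (D : ℝ) ^ (-K) * ((3 : ℝ) / 4) ^ ((D : ℝ) / 2) * (n : ℝ) ^ (-(2 / (D : ℝ)))
        ≤ eta (3 * n) :=
  let ⟨c, K, hc, hK, h⟩ := stmt_0_general
  ⟨c, K, hc, hK, fun D n hD hn ↦ h D n hD (Nat.one_le_of_lt hn)⟩
end

section
/- Let G be an abelian group, let X, Y, Z, W be finite subsets of G with |X| = |Y| = |Z| = n (n ≥ 1), and suppose W is 3-AP-free. Then η(3n) ≥ (1/9) · #{(x,y) ∈ X × Y : x + y ∈ Z and x − y ∈ W} / n². -/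
/-!
Consider the tripartite graph on `X ⊔ Y ⊔ Z` that is the union of the triangles `(x, y, x + y)` with
`x - y ∈ W`. Two vertices of such a triangle determine the third, so these triangles are
edge-disjoint. Any triangle `(x, y, z)` of the graph comes from three of them, witnessed by the
differences `x - (z - x)`, `x - y` and `(z - y) - y` in `W`. These form a three-term arithmetic
progression, which must be trivial, so `z = x + y`. Hence each edge lies in exactly one triangle,
and the number of edges is three times the number of triples.
-/

theorem ncard_edgeSet_div_le_eta {m : ℕ} {H : SimpleGraph (Fin m)}
    (hH : ∀ ⦃u v⦄, H.Adj u v → ∃! w, H.Adj u w ∧ H.Adj v w) :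
    (H.edgeSet.ncard : ℝ) / m ^ 2 ≤ eta m := by
  refine le_csSup (Set.Finite.bddAbove ?_) ⟨H, hH, rfl⟩
  refine (Set.finite_range fun K : SimpleGraph (Fin m) ↦ (K.edgeSet.ncard : ℝ) / m ^ 2).subset ?_
  rintro _ ⟨K, -, rfl⟩
  exact ⟨K, rfl⟩

section LocallyLinear

variable {V : Type*} {H : SimpleGraph V}

theorem existsUnique_adj_adj_of_locallyLinear_s3 (hH : H.LocallyLinear) ⦃u v : V⦄ (huv : H.Adj u v) :
    ∃! w, H.Adj u w ∧ H.Adj v w := by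
  classical
  obtain ⟨s, hs, hus, hvs⟩ := hH.2 huv
  obtain ⟨w, hws, hw⟩ : ∃ w ∈ s, w ∉ ({u, v} : Finset V) :=
    Finset.exists_mem_notMem_of_card_lt_card (Finset.card_le_two.trans_lt (by simp [hs.card_eq]))
  obtain ⟨hwu, hwv⟩ : w ≠ u ∧ w ≠ v := by simpa using hw
  have huw : H.Adj u w := hs.isClique hus hws hwu.symm
  have hvw : H.Adj v w := hs.isClique hvs hws hwv.symm
  refine ⟨w, ⟨huw, hvw⟩, fun w' ⟨huw', hvw'⟩ ↦ ?_⟩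
  have triangle_eq : ({u, v, w'} : Finset V) = {u, v, w} :=
    hH.edgeDisjointTriangles.eq (SimpleGraph.is3Clique_triple_iff.2 ⟨huv, huw', hvw'⟩)
      (SimpleGraph.is3Clique_triple_iff.2 ⟨huv, huw, hvw⟩)
      fun h ↦ huv.ne (h (by simp) (by simp))
  have hw' : w' ∈ ({u, v, w} : Finset V) := triangle_eq ▸ by simp
  simpa [huw'.ne', hvw'.ne'] using hw'

theorem card_edgeFinset_div_le_eta_of_locallyLinear [Fintype V] [Fintype H.edgeSet]
    (hH : H.LocallyLinear) :
    (H.edgeFinset.card : ℝ) / Fintype.card V ^ 2 ≤ eta (Fintype.card V) := by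
  classical
  let e : V ↪ Fin (Fintype.card V) := (Fintype.equivFin V).toEmbedding
  have card_edges : (H.map e).edgeSet.ncard = H.edgeFinset.card := by
    rw [SimpleGraph.edgeSet_map, Set.ncard_image_of_injective _ e.sym2Map.injective,
      ← SimpleGraph.coe_edgeFinset, Set.ncard_coe_finset]
  rw [← card_edges]
  exact ncard_edgeSet_div_le_eta (existsUnique_adj_adj_of_locallyLinear_s3 (hH.map e))

end LocallyLinear

section SumTriples

open SimpleGraph.TripartiteFromTriangles

/-- The triples `(x, y, x + y)` of `X × Y × Z` with `x - y ∈ W`, which index the triangles of the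
graph. The components live in the subtypes, so that the graph has vertex set `X ⊕ Y ⊕ Z`. -/
def sumTriples {G : Type*} [AddGroup G] [DecidableEq G] (X Y Z W : Finset G) :
    Finset (X × Y × Z) :=
  {p | (p.1 + p.2.1 : G) = p.2.2 ∧ (p.1 - p.2.1 : G) ∈ W}

section AddGroup

variable {G : Type*} [AddGroup G] [DecidableEq G] {X Y Z W : Finset G}

theorem mem_sumTriples {x : X} {y : Y} {z : Z} :
    (x, y, z) ∈ sumTriples X Y Z W ↔ (x + y : G) = z ∧ (x - y : G) ∈ W := by
  simp [sumTriples]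

theorem card_sumTriples (X Y Z W : Finset G) :
    (sumTriples X Y Z W).card =
      ((X ×ˢ Y).filter fun p ↦ p.1 + p.2 ∈ Z ∧ p.1 - p.2 ∈ W).card := by
  refine Finset.card_nbij (fun p ↦ ((p.1 : G), (p.2.1 : G))) ?mapsTo ?injOn ?surjOn
  case mapsTo =>
    rintro ⟨x, y, z⟩ h
    obtain ⟨hz, hW⟩ := mem_sumTriples.1 h
    simp [hz, hW]
  case injOn =>
    rintro ⟨x, y, z⟩ h ⟨x', y', z'⟩ h' heq
    obtain ⟨hx, hy⟩ : x = x' ∧ y = y' := by simpa using heq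
    subst hx hy
    have hz : z = z' := Subtype.ext ((mem_sumTriples.1 h).1.symm.trans (mem_sumTriples.1 h').1)
    rw [hz]
  case surjOn =>
    rintro ⟨x, y⟩ h
    obtain ⟨⟨hx, hy⟩, hz, hW⟩ : (x ∈ X ∧ y ∈ Y) ∧ x + y ∈ Z ∧ x - y ∈ W := by simpa using h
    exact ⟨(⟨x, hx⟩, ⟨y, hy⟩, ⟨x + y, hz⟩), mem_sumTriples.2 ⟨rfl, hW⟩, rfl⟩

instance explicitDisjoint_sumTriples : ExplicitDisjoint (sumTriples X Y Z W) where
  inj₀ _ _ _ _ h h' := Subtype.ext <|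
    add_right_cancel ((mem_sumTriples.1 h).1.trans (mem_sumTriples.1 h').1.symm)
  inj₁ _ _ _ _ h h' := Subtype.ext <|
    add_left_cancel ((mem_sumTriples.1 h).1.trans (mem_sumTriples.1 h').1.symm)
  inj₂ _ _ _ _ h h' := Subtype.ext <|
    (mem_sumTriples.1 h).1.symm.trans (mem_sumTriples.1 h').1

end AddGroup

variable {G : Type*} [AddCommGroup G] [DecidableEq G] {W : Finset G}

theorem noAccidental_sumTriples (X Y Z : Finset G) (hW : ThreeAPFree (W : Set G)) :
    NoAccidental (sumTriples X Y Z W) where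
  eq_or_eq_or_eq x x' y y' z z' hx' hy' hz' := by
    obtain ⟨hx'z, hx'W⟩ := mem_sumTriples.1 hx'
    obtain ⟨hy'z, hy'W⟩ := mem_sumTriples.1 hy'
    have arithmetic_progression : (x' - y : G) + (x - y') = (x - y) + (x - y) := by
      rw [eq_sub_of_add_eq hx'z, eq_sub_of_add_eq' hy'z]
      abel
    have sub_eq_sub : (x' - y : G) = x - y :=
      hW hx'W (mem_sumTriples.1 hz').2 hy'W arithmetic_progression
    exact Or.inl (Subtype.ext (sub_left_injective sub_eq_sub.symm))

theorem locallyLinear_graph_sumTriples (X Y Z : Finset G) (hW : ThreeAPFree (W : Set G)) :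
    (graph (sumTriples X Y Z W)).LocallyLinear :=
  have := noAccidental_sumTriples X Y Z hW
  locallyLinear _

theorem card_edgeFinset_graph_sumTriples (X Y Z : Finset G) (hW : ThreeAPFree (W : Set G)) :
    (graph (sumTriples X Y Z W)).edgeFinset.card = 3 * (sumTriples X Y Z W).card := by
  have := noAccidental_sumTriples X Y Z hW
  rw [(locallyLinear_graph_sumTriples X Y Z hW).card_edgeFinset, card_triangles]

end SumTriples

theorem stmt_3_general {G : Type*} [AddCommGroup G] [DecidableEq G]
    (X Y Z W : Finset G) (hW : ThreeAPFree (W : Set G)) :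
    3 * (((X ×ˢ Y).filter (fun p => p.1 + p.2 ∈ Z ∧ p.1 - p.2 ∈ W)).card : ℝ) /
      (X.card + Y.card + Z.card : ℕ) ^ 2 ≤ eta (X.card + Y.card + Z.card) := by
  have card_vertices : Fintype.card (X ⊕ Y ⊕ Z) = X.card + Y.card + Z.card := by
    simp [add_assoc]
  have edge_density_le :=
    card_edgeFinset_div_le_eta_of_locallyLinear (locallyLinear_graph_sumTriples X Y Z hW)
  rw [card_vertices, card_edgeFinset_graph_sumTriples X Y Z hW, card_sumTriples] at edge_density_le
  exact_mod_cast edge_density_le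

theorem stmt_3 {G : Type*} [AddCommGroup G] [DecidableEq G]
    (X Y Z W : Finset G) (n : ℕ) (hn : 1 ≤ n)
    (hX : X.card = n) (hY : Y.card = n) (hZ : Z.card = n)
    (hW : ThreeAPFree (W : Set G)) :
    (1 / 9 : ℝ) *
      (((X ×ˢ Y).filter (fun p => p.1 + p.2 ∈ Z ∧ p.1 - p.2 ∈ W)).card : ℝ) / n ^ 2
      ≤ eta (3 * n) := by
  set N := ((X ×ˢ Y).filter (fun p => p.1 + p.2 ∈ Z ∧ p.1 - p.2 ∈ W)).card
  have card_vertices : X.card + Y.card + Z.card = 3 * n := by omega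
  calc (1 / 9 : ℝ) * N / n ^ 2
      ≤ 3 * (1 / 9 * N / n ^ 2) := le_mul_of_one_le_left (by positivity) (by norm_num)
    _ = 3 * N / (3 * n : ℕ) ^ 2 := by push_cast; ring
    _ ≤ eta (3 * n) := card_vertices ▸ stmt_3_general X Y Z W hW
end

section
/- Fix integers M ≥ 1 and D ≥ 1, and define C : (ℤ^D)² → ℤ by C(x, y) = ‖x − y‖₂² = Σᵢ₌₁^D (xᵢ − yᵢ)². Then: (i) for all (x, y) ∈ ([M+1]^D)² (i.e., x, y ∈ {1,...,M+1}^D), C(x,y) ∈ {0, 1, ..., D·M²}; and (ii) for every k ∈ ℤ, the color class {(x,y) ∈ ([M+1]^D)² : C(x,y) = k} is corner-free. In particular, there exists a coloring of ([M+1]^D)² with D·M² + 1 colors all of whose color classes are corner-free. -/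
/-- A subset `A` of `G × G` is corner-free if there are no `x, y ∈ G` and nonzero `d ∈ G`
with `(x, y)`, `(x + d, y)`, `(x, y + d)` all in `A`. -/
def CornerFree {G : Type*} [AddCommGroup G] (A : Set (G × G)) : Prop :=
  ¬∃ (x y d : G), d ≠ 0 ∧ (x, y) ∈ A ∧ (x + d, y) ∈ A ∧ (x, y + d) ∈ A

/-- The grid `[M+1]^D = {1, ..., M+1}^D ⊆ ℤ^D`. -/
def grid (M D : ℕ) : Set (Fin D → ℤ) := {x | ∀ i, 1 ≤ x i ∧ x i ≤ M + 1}

/-- The Behrend-type coloring `C(x, y) = ‖x - y‖₂²`. -/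
def behrendColor {D : ℕ} (x y : Fin D → ℤ) : ℤ := ∑ i, (x i - y i) ^ 2

/-!
Subtraction sends a corner `(x, y)`, `(x + d, y)`, `(x, y + d)` to the three-term progression
`z - d`, `z`, `z + d` with `z = x - y`, so any coloring by a function of `x - y` whose level sets
contain no such progression has corner-free classes. For a quadratic map `Q` the parallelogram law
`Q (z + d) + Q (z - d) = 2 Q z + 2 Q d` forces `Q d = 0` when `Q` is constant on the progression,
and the squared Euclidean norm vanishes only at `d = 0`.
-/

theorem CornerFree.mono {G : Type*} [AddCommGroup G] {A B : Set (G × G)} (hB : CornerFree B)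
    (hAB : A ⊆ B) : CornerFree A :=
  fun ⟨x, y, d, hd, hxy, hxdy, hxyd⟩ => hB ⟨x, y, d, hd, hAB hxy, hAB hxdy, hAB hxyd⟩

theorem cornerFree_preimage_sub_of_threeAPFree {G : Type*} [AddCommGroup G] {S : Set G}
    (hS : ThreeAPFree S) : CornerFree ((fun p : G × G => p.1 - p.2) ⁻¹' S) := by
  rintro ⟨x, y, d, hd, hxy, hxdy, hxyd⟩
  have hprogression : (x + d - y) + (x - (y + d)) = (x - y) + (x - y) := by abel
  have hsub_eq : x + d - y = x - y := hS hxdy hxy hxyd hprogression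
  exact hd (add_eq_left.mp (sub_left_injective hsub_eq))

section ParallelogramLaw

variable {R M N : Type*} [CommRing R] [AddCommGroup M] [AddCommGroup N] [Module R M] [Module R N]

theorem quadraticMap_parallelogram_law (Q : QuadraticMap R M N) (z d : M) :
    Q (z + d) + Q (z - d) = 2 • Q z + 2 • Q d := by
  rw [sub_eq_add_neg, QuadraticMap.map_add Q z d, QuadraticMap.map_add Q z (-d), Q.map_neg,
    Q.polar_neg_right]
  abel

theorem threeAPFree_preimage_singleton_of_anisotropic {Q : QuadraticMap R M N}
    (hQ : Q.Anisotropic) (hN : IsSMulRegular N 2) (k : N) : ThreeAPFree (Q ⁻¹' {k}) := by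
  rintro a (ha : Q a = k) b (hb : Q b = k) c (hc : Q c = k) hac
  have hc_eq : b - (a - b) = c := by
    rw [sub_sub_eq_add_sub, sub_eq_iff_eq_add', hac]
  have hparallelogram := quadraticMap_parallelogram_law Q b (a - b)
  rw [add_sub_cancel, hc_eq, ha, hb, hc, ← two_nsmul, left_eq_add] at hparallelogram
  exact sub_eq_zero.mp (hQ _ (hN.right_eq_zero_of_smul hparallelogram))

end ParallelogramLaw

theorem anisotropic_pi_sq {ι R : Type*} [Fintype ι] [CommRing R] [LinearOrder R]
    [IsStrictOrderedRing R] :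
    (QuadraticMap.pi fun _ : ι => QuadraticMap.sq (R := R) (A := R)).Anisotropic := by
  refine (QuadraticMap.posDef_pi_iff.mpr fun _ => ?_).anisotropic
  intro x hx
  simpa only [QuadraticMap.sq_apply] using mul_self_pos.mpr hx

section BehrendColor

variable {D : ℕ}

theorem behrendColor_eq_pi_sq (x y : Fin D → ℤ) :
    behrendColor x y = QuadraticMap.pi (fun _ => QuadraticMap.sq (R := ℤ) (A := ℤ)) (x - y) := by
  simp only [behrendColor, QuadraticMap.pi_apply, QuadraticMap.sq_apply, Pi.sub_apply, sq]

theorem behrendColor_nonneg (x y : Fin D → ℤ) : 0 ≤ behrendColor x y :=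
  Finset.sum_nonneg fun _ _ => sq_nonneg _

theorem behrendColor_le_of_forall_abs_sub_le {x y : Fin D → ℤ} {r : ℤ}
    (h : ∀ i, |x i - y i| ≤ r) : behrendColor x y ≤ D * r ^ 2 := by
  calc behrendColor x y ≤ ∑ _i : Fin D, r ^ 2 :=
        Finset.sum_le_sum fun i _ => sq_le_sq' (abs_le.mp (h i)).1 (abs_le.mp (h i)).2
    _ = D * r ^ 2 := by rw [Finset.sum_const, Finset.card_fin, nsmul_eq_mul]

theorem abs_sub_le_of_mem_grid {M : ℕ} {x y : Fin D → ℤ} (hx : x ∈ grid M D)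
    (hy : y ∈ grid M D) (i : Fin D) : |x i - y i| ≤ M := by
  have hxi := hx i
  have hyi := hy i
  rw [abs_le]
  constructor <;> linarith

theorem cornerFree_setOf_behrendColor_eq (k : ℤ) :
    CornerFree {p : (Fin D → ℤ) × (Fin D → ℤ) | behrendColor p.1 p.2 = k} := by
  simp only [behrendColor_eq_pi_sq]
  exact cornerFree_preimage_sub_of_threeAPFree
    (threeAPFree_preimage_singleton_of_anisotropic anisotropic_pi_sq
      (nsmul_right_injective two_ne_zero) k)

end BehrendColor

theorem stmt_6 (M D : ℕ) (hM : 1 ≤ M) (hD : 1 ≤ D) :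
    (∀ x ∈ grid M D, ∀ y ∈ grid M D,
        0 ≤ behrendColor x y ∧ behrendColor x y ≤ D * M ^ 2) ∧
    (∀ k : ℤ, CornerFree
        {p : (Fin D → ℤ) × (Fin D → ℤ) |
          (p.1 ∈ grid M D ∧ p.2 ∈ grid M D) ∧ behrendColor p.1 p.2 = k}) := by
  refine ⟨fun x hx y hy => ⟨behrendColor_nonneg x y, ?_⟩, fun k => ?_⟩
  · exact behrendColor_le_of_forall_abs_sub_le (abs_sub_le_of_mem_grid hx hy)
  · exact (cornerFree_setOf_behrendColor_eq k).mono fun _ hp => hp.2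
end

section
/- There exist absolute constants c > 0 and K > 0 such that for every integer D ≥ 1, letting B = {x ∈ ℝ^D : ‖x‖₂ ≤ 1} be the closed unit Euclidean ball, the 2D-dimensional Lebesgue measure of {(x, y) ∈ ℝ^D × ℝ^D : x ∈ B, y ∈ B, x + y ∈ B} is at least c · D^{-K} · (3/4)^{D/2} · vol(B)², where vol(B) is the D-dimensional Lebesgue measure of B. Equivalently, for x, y drawn independently and uniformly from B, the probability that x + y ∈ B is at least c · D^{-K} · (3/4)^{D/2}. -/
open MeasureTheory

/-!
If `‖x‖ ≤ 1`, the lens `{y | ‖y‖ ≤ 1, ‖x + y‖ ≤ 1}` is centred at `-x / 2`, and orthogonally to `x`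
it extends to distance at least `√(3/4)` from its centre. The ball of slightly smaller radius
`√(3/4) * s` around the centre lies in the lens once it is contracted by `√(3/4) * (1 - s)` in the
direction of `x`, and this contraction costs only that factor in volume. In dimension `n` the choice
`s = 1 - 1 / (2 * n)` keeps `s ^ n` bounded below while `1 - s` is only polynomially small.
Integrating over `x` gives the bound.
-/

section

open Metric Module
open scoped ENNReal RealInnerProductSpace

theorem mul_measure_le_prod {α β : Type*} [MeasurableSpace α] [MeasurableSpace β]
    {μ : Measure α} {ν : Measure β} [SFinite ν] {s : Set α} {t : Set (α × β)} {c : ℝ≥0∞}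
    (h : ∀ x ∈ s, c ≤ ν (Prod.mk x ⁻¹' t)) : c * μ s ≤ μ.prod ν t := by
  let T := toMeasurable (μ.prod ν) t
  have hT : MeasurableSet T := measurableSet_toMeasurable _ _
  have hsT : s ⊆ {x | c ≤ ν (Prod.mk x ⁻¹' T)} := fun x hx ↦
    (h x hx).trans (measure_mono (Set.preimage_mono (subset_toMeasurable _ _)))
  calc c * μ s ≤ c * μ {x | c ≤ ν (Prod.mk x ⁻¹' T)} := by gcongr
    _ ≤ ∫⁻ x, ν (Prod.mk x ⁻¹' T) ∂μ :=
      mul_meas_ge_le_lintegral (measurable_measure_prodMk_left hT) c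
    _ = μ.prod ν t := by rw [← Measure.prod_apply hT, measure_toMeasurable]

variable {E : Type*} [NormedAddCommGroup E] [InnerProductSpace ℝ E]

/-- The linear map that scales the direction of `x` by `t` and fixes the orthogonal complement
of `x`. For `x = 0` it is the identity, whatever `t` is. -/
noncomputable def axialScaling (x : E) (t : ℝ) : E →ₗ[ℝ] E :=
  LinearMap.transvection (innerₗ E x) (((t - 1) / ‖x‖ ^ 2) • x)

theorem axialScaling_apply (x : E) (t : ℝ) (z : E) :
    axialScaling x t z = z + (⟪x, z⟫ * ((t - 1) / ‖x‖ ^ 2)) • x := by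
  simp [axialScaling, LinearMap.transvection.apply, smul_smul]

theorem inner_axialScaling (x : E) (t : ℝ) (z : E) : ⟪x, axialScaling x t z⟫ = t * ⟪x, z⟫ := by
  rcases eq_or_ne x 0 with rfl | hx
  · simp
  · have : ‖x‖ ≠ 0 := norm_ne_zero_iff.mpr hx
    rw [axialScaling_apply, inner_add_right, inner_smul_right, real_inner_self_eq_norm_sq]
    field_simp
    ring

theorem norm_axialScaling_sq (x : E) (t : ℝ) (z : E) :
    ‖axialScaling x t z‖ ^ 2 = ‖z‖ ^ 2 - (1 - t ^ 2) * (⟪x, z⟫ / ‖x‖) ^ 2 := by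
  rcases eq_or_ne x 0 with rfl | hx
  · simp [axialScaling_apply]
  · have : ‖x‖ ≠ 0 := norm_ne_zero_iff.mpr hx
    rw [axialScaling_apply, norm_add_sq_real, inner_smul_right, real_inner_comm, norm_smul,
      mul_pow, Real.norm_eq_abs, sq_abs]
    field_simp
    ring

theorem norm_axialScaling_le (x : E) {t : ℝ} (ht : |t| ≤ 1) (z : E) :
    ‖axialScaling x t z‖ ≤ ‖z‖ := by
  have : 0 ≤ (1 - t ^ 2) * (⟪x, z⟫ / ‖x‖) ^ 2 :=
    mul_nonneg (sub_nonneg.mpr ((sq_le_one_iff_abs_le_one t).mpr ht)) (sq_nonneg _)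
  refine le_of_sq_le_sq ?_ (norm_nonneg z)
  linarith [norm_axialScaling_sq x t z]

theorem closedBall_inter_slab_subset {v : E} {ρ δ r : ℝ} (hr : 0 ≤ r)
    (h : ρ ^ 2 + 2 * δ + ‖v‖ ^ 2 ≤ r ^ 2) :
    closedBall 0 ρ ∩ {z | |⟪v, z⟫| ≤ δ} ⊆ closedBall v r ∩ closedBall (-v) r := by
  rintro z ⟨hzρ, (hzδ : |⟪v, z⟫| ≤ δ)⟩
  have hz : ‖z‖ ^ 2 ≤ ρ ^ 2 := by
    gcongr
    exact mem_closedBall_zero_iff.mp hzρ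
  obtain ⟨hδ₁, hδ₂⟩ := abs_le.mp hzδ
  simp only [Set.mem_inter_iff, mem_closedBall_iff_norm, sub_neg_eq_add]
  constructor
  · refine le_of_sq_le_sq ?_ hr
    rw [norm_sub_sq_real, real_inner_comm]
    linarith
  · refine le_of_sq_le_sq ?_ hr
    rw [norm_add_sq_real, real_inner_comm]
    linarith

variable [FiniteDimensional ℝ E]

theorem det_axialScaling {x : E} (hx : x ≠ 0) (t : ℝ) : LinearMap.det (axialScaling x t) = t := by
  have : ‖x‖ ≠ 0 := norm_ne_zero_iff.mpr hx
  rw [axialScaling, LinearMap.transvection.det, innerₗ_apply_apply, inner_smul_right,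
    real_inner_self_eq_norm_sq]
  field_simp
  ring

variable [MeasurableSpace E] [BorelSpace E] (μ : Measure E) [μ.IsAddHaarMeasure]

theorem ofReal_mul_measure_closedBall_le_slab (x : E) (r : ℝ) {t : ℝ} (ht₀ : 0 ≤ t) (ht₁ : t ≤ 1) :
    ENNReal.ofReal t * μ (closedBall 0 r) ≤
      μ (closedBall 0 r ∩ {z | |⟪x, z⟫| ≤ t * (‖x‖ * r)}) := by
  have h_det : t ≤ |LinearMap.det (axialScaling x t)| := by
    rcases eq_or_ne x 0 with rfl | hx
    · simpa [axialScaling] using ht₁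
    · rw [det_axialScaling hx]
      exact le_abs_self t
  calc ENNReal.ofReal t * μ (closedBall 0 r)
      ≤ ENNReal.ofReal |LinearMap.det (axialScaling x t)| * μ (closedBall 0 r) := by gcongr
    _ = μ (axialScaling x t '' closedBall 0 r) := (μ.addHaar_image_linearMap _ _).symm
    _ ≤ μ (closedBall 0 r ∩ {z | |⟪x, z⟫| ≤ t * (‖x‖ * r)}) := by
      refine measure_mono (Set.image_subset_iff.mpr fun z hz ↦ ?_)
      have hzr : ‖z‖ ≤ r := mem_closedBall_zero_iff.mp hz
      refine ⟨mem_closedBall_zero_iff.mpr ?_, ?_⟩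
      · exact (norm_axialScaling_le x (abs_le.mpr ⟨by linarith, ht₁⟩) z).trans hzr
      · rw [Set.mem_ofPred_eq, inner_axialScaling, abs_mul, abs_of_nonneg ht₀]
        gcongr
        exact (abs_real_inner_le_norm x z).trans (by gcongr)

theorem ofReal_mul_measure_closedBall_le_symmetric_lens {v : E} {r s : ℝ} (hv : ‖v‖ ≤ r / 2)
    (hs₀ : 0 ≤ s) (hs₁ : s ≤ 1) :
    ENNReal.ofReal (√(3 / 4) * (1 - s)) * μ (closedBall 0 (√(3 / 4) * s * r)) ≤
      μ (closedBall v r ∩ closedBall (-v) r) := by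
  have hr : 0 ≤ r := by linarith [norm_nonneg v]
  have hs : 0 ≤ 1 - s := sub_nonneg.mpr hs₁
  have ha_sq : √(3 / 4 : ℝ) ^ 2 = 3 / 4 := Real.sq_sqrt (by norm_num)
  have ha₁ : √(3 / 4 : ℝ) ≤ 1 := Real.sqrt_le_one.mpr (by norm_num)
  set a := √(3 / 4 : ℝ)
  have ha₀ : 0 ≤ a := Real.sqrt_nonneg _
  have h_radii : (a * s * r) ^ 2 + 2 * (a * (1 - s) * (‖v‖ * (a * s * r))) + ‖v‖ ^ 2 ≤ r ^ 2 :=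
    calc (a * s * r) ^ 2 + 2 * (a * (1 - s) * (‖v‖ * (a * s * r))) + ‖v‖ ^ 2
        ≤ (a * s * r) ^ 2 + 2 * (a * (1 - s) * (r / 2 * (a * s * r))) + (r / 2) ^ 2 := by gcongr
      _ = (a ^ 2 * s + 1 / 4) * r ^ 2 := by ring
      _ ≤ 1 * r ^ 2 := by rw [ha_sq]; gcongr; linarith
      _ = r ^ 2 := one_mul _
  calc ENNReal.ofReal (a * (1 - s)) * μ (closedBall 0 (a * s * r))
      ≤ μ (closedBall 0 (a * s * r) ∩ {z | |⟪v, z⟫| ≤ a * (1 - s) * (‖v‖ * (a * s * r))}) :=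
        ofReal_mul_measure_closedBall_le_slab μ v _ (mul_nonneg ha₀ hs)
          (mul_le_one₀ ha₁ hs (sub_le_self 1 hs₀))
    _ ≤ μ (closedBall v r ∩ closedBall (-v) r) :=
        measure_mono (closedBall_inter_slab_subset hr h_radii)

theorem ofReal_mul_measure_closedBall_le_lens {x y : E} {r s : ℝ} (hxy : dist x y ≤ r)
    (hs₀ : 0 ≤ s) (hs₁ : s ≤ 1) :
    ENNReal.ofReal (√(3 / 4) * (1 - s)) * μ (closedBall 0 (√(3 / 4) * s * r)) ≤
      μ (closedBall x r ∩ closedBall y r) := by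
  have h_norm : ‖x - midpoint ℝ x y‖ ≤ r / 2 := by
    rw [← dist_eq_norm, dist_left_midpoint, Real.norm_ofNat]
    linarith
  have h_neg : y - midpoint ℝ x y = -(x - midpoint ℝ x y) := by
    rw [left_sub_midpoint, right_sub_midpoint, ← smul_neg, neg_sub]
  rw [← measure_preimage_add_right μ (midpoint ℝ x y) (closedBall x r ∩ closedBall y r),
    Set.preimage_inter, preimage_add_right_closedBall, preimage_add_right_closedBall, h_neg]
  exact ofReal_mul_measure_closedBall_le_symmetric_lens μ h_norm hs₀ hs₁

theorem ofReal_mul_measure_closedBall_mul_le_prod (r : ℝ) {s : ℝ} (hs₀ : 0 < s) (hs₁ : s ≤ 1) :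
    ENNReal.ofReal (√(3 / 4) * (1 - s) * (√(3 / 4) * s) ^ finrank ℝ E) *
        μ (closedBall 0 r) * μ (closedBall 0 r) ≤
      μ.prod μ {p | p.1 ∈ closedBall 0 r ∧ p.2 ∈ closedBall 0 r ∧ p.1 + p.2 ∈ closedBall 0 r} := by
  refine mul_measure_le_prod fun x hx ↦ ?_
  have hxr : dist 0 (-x) ≤ r := by simpa using hx
  calc ENNReal.ofReal (√(3 / 4) * (1 - s) * (√(3 / 4) * s) ^ finrank ℝ E) * μ (closedBall 0 r)
      = ENNReal.ofReal (√(3 / 4) * (1 - s)) * μ (closedBall 0 (√(3 / 4) * s * r)) := by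
        have : 0 ≤ √(3 / 4) * (1 - s) := mul_nonneg (Real.sqrt_nonneg _) (sub_nonneg.mpr hs₁)
        rw [μ.addHaar_closedBall_mul_of_pos 0 (by positivity), ENNReal.ofReal_mul this, mul_assoc]
    _ ≤ μ (closedBall 0 r ∩ closedBall (-x) r) :=
        ofReal_mul_measure_closedBall_le_lens μ hxr hs₀.le hs₁
    _ ≤ _ := by
        refine measure_mono fun y ⟨hy, hxy⟩ ↦ ⟨hx, hy, ?_⟩
        simpa [dist_eq_norm, add_comm x y] using hxy

theorem mul_measureReal_closedBall_sq_le_prod (r : ℝ) {s : ℝ} (hs₀ : 0 < s) (hs₁ : s ≤ 1) :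
    √(3 / 4) * (1 - s) * (√(3 / 4) * s) ^ finrank ℝ E * μ.real (closedBall 0 r) ^ 2 ≤
      (μ.prod μ).real
        {p | p.1 ∈ closedBall 0 r ∧ p.2 ∈ closedBall 0 r ∧ p.1 + p.2 ∈ closedBall 0 r} := by
  have h_nonneg : 0 ≤ √(3 / 4) * (1 - s) * (√(3 / 4) * s) ^ finrank ℝ E := by
    have : 0 ≤ 1 - s := sub_nonneg.mpr hs₁
    positivity
  have h_square : μ.prod μ (closedBall 0 r ×ˢ closedBall 0 r) ≠ ∞ := by
    rw [Measure.prod_prod]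
    exact ENNReal.mul_ne_top measure_closedBall_lt_top.ne measure_closedBall_lt_top.ne
  have h_le := ENNReal.toReal_mono
    (ne_top_of_le_ne_top h_square (measure_mono fun _ hp ↦ ⟨hp.1, hp.2.1⟩))
    (ofReal_mul_measure_closedBall_mul_le_prod μ r hs₀ hs₁)
  rwa [ENNReal.toReal_mul, ENNReal.toReal_mul, ENNReal.toReal_ofReal h_nonneg, mul_assoc,
    ← sq] at h_le

theorem half_le_one_sub_one_div_two_mul_pow (n : ℕ) : 1 / 2 ≤ (1 - 1 / (2 * n) : ℝ) ^ n := by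
  rcases n.eq_zero_or_pos with rfl | hn
  · norm_num
  · have hn₁ : (1 : ℝ) ≤ n := by exact_mod_cast hn
    have h_le : 1 / (2 * n : ℝ) ≤ 1 := (div_le_one (by positivity)).mpr (by linarith)
    calc (1 / 2 : ℝ) = 1 + n * (1 - 1 / (2 * n) - 1) := by field_simp; ring
      _ ≤ (1 - 1 / (2 * n) : ℝ) ^ n := one_add_mul_sub_le_pow (by linarith) n

theorem stmt_9_general [Nontrivial E] (r : ℝ) :
    √3 / 8 * (finrank ℝ E : ℝ) ^ (-1 : ℝ) * ((3 : ℝ) / 4) ^ ((finrank ℝ E : ℝ) / 2) *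
        μ.real (closedBall 0 r) ^ 2 ≤
      (μ.prod μ).real
        {p | p.1 ∈ closedBall 0 r ∧ p.2 ∈ closedBall 0 r ∧ p.1 + p.2 ∈ closedBall 0 r} := by
  have hn₁ : (1 : ℝ) ≤ finrank ℝ E := by exact_mod_cast finrank_pos (R := ℝ) (M := E)
  set n := finrank ℝ E
  set s : ℝ := 1 - 1 / (2 * n) with hs
  have hs₁ : s ≤ 1 := sub_le_self 1 (by positivity)
  have hs₀ : 0 < s := sub_pos.mpr ((div_lt_one (by positivity)).mpr (by linarith))
  have h_sqrt : √(3 / 4 : ℝ) = √3 / 2 := by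
    rw [Real.sqrt_div (by norm_num), show (4 : ℝ) = 2 ^ 2 by norm_num, Real.sqrt_sq (by norm_num)]
  have h_pow : ((3 : ℝ) / 4) ^ ((n : ℝ) / 2) = √(3 / 4) ^ n := by
    rw [Real.rpow_div_two_eq_sqrt _ (by norm_num), Real.rpow_natCast]
  have : 0 ≤ 1 - s := sub_nonneg.mpr hs₁
  calc √3 / 8 * (n : ℝ) ^ (-1 : ℝ) * ((3 : ℝ) / 4) ^ ((n : ℝ) / 2) * μ.real (closedBall 0 r) ^ 2
      = √(3 / 4) * (1 - s) * (√(3 / 4) ^ n * (1 / 2)) * μ.real (closedBall 0 r) ^ 2 := by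
        rw [h_pow, Real.rpow_neg_one, hs]
        nth_rw 2 [h_sqrt]
        field_simp
        ring
    _ ≤ √(3 / 4) * (1 - s) * (√(3 / 4) ^ n * s ^ n) * μ.real (closedBall 0 r) ^ 2 := by
        gcongr
        exact half_le_one_sub_one_div_two_mul_pow n
    _ = √(3 / 4) * (1 - s) * (√(3 / 4) * s) ^ n * μ.real (closedBall 0 r) ^ 2 := by rw [mul_pow]
    _ ≤ _ := mul_measureReal_closedBall_sq_le_prod μ r hs₀ hs₁

end

theorem stmt_9 :
    ∃ c K : ℝ, 0 < c ∧ 0 < K ∧ ∀ D : ℕ, 1 ≤ D →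
      c * (D : ℝ) ^ (-K) * ((3 : ℝ) / 4) ^ ((D : ℝ) / 2) *
          ((volume (Metric.closedBall (0 : EuclideanSpace ℝ (Fin D)) 1)).toReal) ^ 2
        ≤ (volume {p : EuclideanSpace ℝ (Fin D) × EuclideanSpace ℝ (Fin D) |
            p.1 ∈ Metric.closedBall (0 : EuclideanSpace ℝ (Fin D)) 1 ∧
            p.2 ∈ Metric.closedBall (0 : EuclideanSpace ℝ (Fin D)) 1 ∧
            p.1 + p.2 ∈ Metric.closedBall (0 : EuclideanSpace ℝ (Fin D)) 1}).toReal := by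
  refine ⟨√3 / 8, 1, by positivity, one_pos, fun D hD ↦ ?_⟩
  have : NeZero D := ⟨by omega⟩
  simpa only [finrank_euclideanSpace_fin] using!
    stmt_9_general (volume : Measure (EuclideanSpace ℝ (Fin D))) 1
end

section
/- Let D ≥ 1 and let S ⊆ ℝ^D be a Lebesgue-measurable set of finite measure. Then there exists t ∈ [0,1)^D such that the number of integer lattice points in t + S is at least μ(S), i.e., |(t + S) ∩ ℤ^D| ≥ μ(S), where μ denotes Lebesgue measure. -/
open MeasureTheory

/-!
Every point `t` of a fundamental domain `F` of a lattice `L` is covered by the translates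
`n + (-S)`, `n ∈ L`, as many times as `t + S` contains points of `L`. Integrating this multiplicity
over `F` gives the volume of `S`, since moving back by `-n` turns `(n + (-S)) ∩ F` into the part of
`-S` lying in the tile `-n + F`. Some value of the multiplicity is at least its mean
`vol S / vol F`.
-/

open Module Set
open scoped ENNReal Pointwise

section Multiplicity

variable {α : Type*} [MeasurableSpace α] {μ : Measure α}

theorem lintegral_encard_mem_eq_tsum_measure {ι : Type*} [Countable ι] {s : ι → Set α}
    (hs : ∀ i, NullMeasurableSet (s i) μ) :
    ∫⁻ x, ({i | x ∈ s i}.encard : ℝ≥0∞) ∂μ = ∑' i, μ (s i) := by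
  calc ∫⁻ x, ({i | x ∈ s i}.encard : ℝ≥0∞) ∂μ
      = ∫⁻ x, ∑' i, (s i).indicator 1 x ∂μ := by
        refine lintegral_congr fun x ↦ ?_
        rw [← ENNReal.tsum_set_one, tsum_subtype {i | x ∈ s i} fun _ ↦ (1 : ℝ≥0∞)]
        rfl
    _ = ∑' i, ∫⁻ x, (s i).indicator 1 x ∂μ :=
        lintegral_tsum fun i ↦ aemeasurable_const.indicator₀ (hs i)
    _ = ∑' i, μ (s i) := tsum_congr fun i ↦ lintegral_indicator_one₀ (hs i)

variable {G : Type*} [AddGroup G] [Countable G] [AddAction G α] [MeasurableConstVAdd G α]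
  [VAddInvariantMeasure G α μ] {F s : Set α}

theorem setLIntegral_encard_mem_vadd_eq_measure (hF : IsAddFundamentalDomain G F μ)
    (hs : NullMeasurableSet s μ) :
    ∫⁻ x in F, ({g : G | x ∈ g +ᵥ s}.encard : ℝ≥0∞) ∂μ = μ s := by
  have hgs (g : G) : NullMeasurableSet (g +ᵥ s) μ := hs.vadd g
  rw [lintegral_encard_mem_eq_tsum_measure fun g ↦
      (hgs g).mono_ac Measure.restrict_le_self.absolutelyContinuous, hF.measure_eq_tsum s]
  exact tsum_congr fun g ↦ Measure.restrict_apply₀' hF.nullMeasurableSet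

theorem exists_mem_measure_div_le_encard_mem_vadd [NeZero μ] (hF : IsAddFundamentalDomain G F μ)
    (hs : NullMeasurableSet s μ) (hs_fin : μ s ≠ ∞) :
    ∃ x ∈ F, μ s / μ F ≤ ({g : G | x ∈ g +ᵥ s}.encard : ℝ≥0∞) := by
  have h_integral := setLIntegral_encard_mem_vadd_eq_measure hF hs
  obtain ⟨x, hxF, hx⟩ := exists_setLAverage_le (hF.measure_ne_zero (NeZero.ne μ))
    hF.nullMeasurableSet (h_integral.trans_ne hs_fin)
  exact ⟨x, hxF, by rwa [setLAverage_eq, h_integral] at hx⟩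

end Multiplicity

section Lattice

variable {E : Type*} [AddGroup E] {L : AddSubgroup E} {s : Set E}

theorem encard_image_add_inter_eq_encard_mem_vadd_neg (t : E) :
    ((t + ·) '' s ∩ L).encard = {n : L | t ∈ n +ᵥ -s}.encard := by
  rw [← Subtype.val_injective.encard_image]
  congr 1
  ext x
  simp [mem_vadd_set_iff_neg_vadd_mem, AddSubgroup.vadd_def]

theorem exists_mem_measure_div_le_encard_image_add_inter [MeasurableSpace E] [MeasurableAdd E]
    [MeasurableNeg E] [Countable L] {μ : Measure E} [μ.IsAddLeftInvariant] [μ.IsNegInvariant]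
    [NeZero μ] {F : Set E} (hF : IsAddFundamentalDomain L F μ) (hs : NullMeasurableSet s μ)
    (hs_fin : μ s ≠ ∞) :
    ∃ t ∈ F, μ s / μ F ≤ (((t + ·) '' s ∩ L).encard : ℝ≥0∞) := by
  have h_neg : μ (-s) = μ s := Measure.measure_neg μ s
  have hs_neg : NullMeasurableSet (-s) μ :=
    hs.preimage (Measure.measurePreserving_neg μ).quasiMeasurePreserving
  obtain ⟨t, htF, ht⟩ :=
    exists_mem_measure_div_le_encard_mem_vadd hF hs_neg (h_neg.trans_ne hs_fin)
  exact ⟨t, htF, by rwa [encard_image_add_inter_eq_encard_mem_vadd_neg, ← h_neg]⟩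

end Lattice

section IntegerPoints

variable {ι : Type*}

theorem coe_span_int_range_basisFun [Finite ι] :
    (Submodule.span ℤ (range (Pi.basisFun ℝ ι)) : Set (ι → ℝ)) =
      {x : ι → ℝ | ∀ i, ∃ m : ℤ, x i = m} := by
  ext x
  simp [Basis.mem_span_iff_repr_mem, eq_comm]

variable [Fintype ι]

theorem volume_fundamentalDomain_basisFun :
    volume (ZSpan.fundamentalDomain (Pi.basisFun ℝ ι)) = 1 := by
  simp [ZSpan.fundamentalDomain_pi_basisFun, volume_pi_pi]

theorem stmt_10_general {S : Set (ι → ℝ)} (hS : NullMeasurableSet S) (hfin : volume S ≠ ∞) :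
    ∃ t : ι → ℝ, (∀ i, 0 ≤ t i ∧ t i < 1) ∧
      volume S ≤ (((t + ·) '' S ∩ {x : ι → ℝ | ∀ i, ∃ m : ℤ, x i = m}).encard : ℝ≥0∞) := by
  have : Countable (Submodule.span ℤ (range (Pi.basisFun ℝ ι))).toAddSubgroup :=
    inferInstanceAs (Countable (Submodule.span ℤ (range (Pi.basisFun ℝ ι))))
  obtain ⟨t, ht, hcount⟩ := exists_mem_measure_div_le_encard_image_add_inter
    (ZSpan.isAddFundamentalDomain' (Pi.basisFun ℝ ι) volume) hS hfin
  rw [volume_fundamentalDomain_basisFun, div_one, Submodule.coe_toAddSubgroup,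
    coe_span_int_range_basisFun] at hcount
  rw [ZSpan.fundamentalDomain_pi_basisFun] at ht
  exact ⟨t, fun i ↦ ht i (mem_univ i), hcount⟩

end IntegerPoints

theorem stmt_10 (D : ℕ) (hD : 1 ≤ D) (S : Set (Fin D → ℝ))
    (hS : MeasurableSet S) (hfin : volume S < ⊤) :
    ∃ t : Fin D → ℝ, (∀ i, 0 ≤ t i ∧ t i < 1) ∧
      volume S ≤ (((t + ·) '' S ∩ {x : Fin D → ℝ | ∀ i, ∃ m : ℤ, x i = m}).encard : ENNReal) :=
  stmt_10_general hS.nullMeasurableSet hfin.ne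
end

section
/- Let D ≥ 1 and let x, y ∈ ℝ^D be nonzero vectors such that ⟨x/‖x‖₂, y/‖y‖₂⟩ ≤ −1/2, where ⟨·,·⟩ is the standard inner product. Then ‖x + y‖₂ ≤ max(‖x‖₂, ‖y‖₂). In particular, if x and y both lie in the closed unit Euclidean ball and their normalizations u = x/‖x‖₂, v = y/‖y‖₂ satisfy ‖u + v‖₂ ≤ 1, then x + y also lies in the closed unit ball. -/
open RealInnerProductSpace

/-!
Expanding `‖x + y‖ ^ 2` shows that `‖x + y‖ ≤ max ‖x‖ ‖y‖` is equivalent to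
`2 * ⟪x, y⟫ ≤ -min ‖x‖ ‖y‖ ^ 2`. An angle of at least `2π / 3` gives the stronger bound
`2 * ⟪x, y⟫ ≤ -(‖x‖ * ‖y‖)`, and for unit vectors the two bounds coincide.
-/

section SeminormedAddCommGroup

variable {E : Type*} [SeminormedAddCommGroup E] [InnerProductSpace ℝ E] {x y : E}

theorem norm_add_le_norm_left_iff_inner_le : ‖x + y‖ ≤ ‖x‖ ↔ 2 * ⟪x, y⟫ ≤ -‖y‖ ^ 2 := by
  rw [← sq_le_sq₀ (norm_nonneg _) (norm_nonneg _), norm_add_sq_real]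
  constructor <;> intro h <;> linarith

theorem norm_add_le_max_iff_inner_le :
    ‖x + y‖ ≤ max ‖x‖ ‖y‖ ↔ 2 * ⟪x, y⟫ ≤ -min ‖x‖ ‖y‖ ^ 2 := by
  rcases le_total ‖x‖ ‖y‖ with hxy | hyx
  · rw [max_eq_right hxy, min_eq_left hxy, add_comm, real_inner_comm]
    exact norm_add_le_norm_left_iff_inner_le
  · rw [max_eq_left hyx, min_eq_right hyx]
    exact norm_add_le_norm_left_iff_inner_le

theorem norm_add_le_max_of_inner_le (h : ⟪x, y⟫ ≤ -(1 / 2) * (‖x‖ * ‖y‖)) :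
    ‖x + y‖ ≤ max ‖x‖ ‖y‖ := by
  have min_sq_le : min ‖x‖ ‖y‖ ^ 2 ≤ ‖x‖ * ‖y‖ := by
    rw [sq]
    gcongr
    exacts [min_le_left _ _, min_le_right _ _]
  rw [norm_add_le_max_iff_inner_le]
  linarith

theorem norm_add_le_one_iff_inner_le_of_norm_eq_one (hx : ‖x‖ = 1) (hy : ‖y‖ = 1) :
    ‖x + y‖ ≤ 1 ↔ ⟪x, y⟫ ≤ -(1 / 2) := by
  rw [← hx, norm_add_le_norm_left_iff_inner_le, hy]
  constructor <;> intro h <;> linarith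

end SeminormedAddCommGroup

section NormedAddCommGroup

variable {E : Type*} [NormedAddCommGroup E] [InnerProductSpace ℝ E] {x y : E}

theorem inner_inv_norm_smul_le_iff (hx : x ≠ 0) (hy : y ≠ 0) {c : ℝ} :
    ⟪‖x‖⁻¹ • x, ‖y‖⁻¹ • y⟫ ≤ c ↔ ⟪x, y⟫ ≤ c * (‖x‖ * ‖y‖) := by
  have inner_eq_div : ⟪‖x‖⁻¹ • x, ‖y‖⁻¹ • y⟫ = ⟪x, y⟫ / (‖x‖ * ‖y‖) := by
    rw [real_inner_smul_left, real_inner_smul_right]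
    ring
  rw [inner_eq_div, div_le_iff₀ (by positivity)]

theorem stmt_12_general (hx : x ≠ 0) (hy : y ≠ 0) :
    (⟪‖x‖⁻¹ • x, ‖y‖⁻¹ • y⟫ ≤ -(1 / 2) → ‖x + y‖ ≤ max ‖x‖ ‖y‖) ∧
    (‖x‖ ≤ 1 → ‖y‖ ≤ 1 → ‖‖x‖⁻¹ • x + ‖y‖⁻¹ • y‖ ≤ 1 → ‖x + y‖ ≤ 1) := by
  have norm_add_le_max (h : ⟪‖x‖⁻¹ • x, ‖y‖⁻¹ • y⟫ ≤ -(1 / 2)) : ‖x + y‖ ≤ max ‖x‖ ‖y‖ :=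
    norm_add_le_max_of_inner_le ((inner_inv_norm_smul_le_iff hx hy).mp h)
  refine ⟨norm_add_le_max, fun hx_le hy_le h_add => ?_⟩
  have inner_le : ⟪‖x‖⁻¹ • x, ‖y‖⁻¹ • y⟫ ≤ -(1 / 2) :=
    (norm_add_le_one_iff_inner_le_of_norm_eq_one (norm_smul_inv_norm (𝕜 := ℝ) hx)
      (norm_smul_inv_norm (𝕜 := ℝ) hy)).mp h_add
  exact (norm_add_le_max inner_le).trans (max_le hx_le hy_le)

end NormedAddCommGroup

theorem stmt_12 (D : ℕ) (hD : 1 ≤ D) (x y : EuclideanSpace ℝ (Fin D))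
    (hx : x ≠ 0) (hy : y ≠ 0) :
    (⟪‖x‖⁻¹ • x, ‖y‖⁻¹ • y⟫ ≤ -(1 / 2) → ‖x + y‖ ≤ max ‖x‖ ‖y‖) ∧
    (‖x‖ ≤ 1 → ‖y‖ ≤ 1 → ‖‖x‖⁻¹ • x + ‖y‖⁻¹ • y‖ ≤ 1 → ‖x + y‖ ≤ 1) :=
  stmt_12_general hx hy
end
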